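/- arXiv:1401.5560 — 2 statements merged into one kernel-verified Lean document; each statement's English description precedes it below -/
import Mathlib

section
/- Let G be a finite group with G = AB, where A is a subnormal subgroup of G and B is a supersoluble Hall subgroup of G all of whose Sylow subgroups are cyclic. If every maximal subgroup of every non-cyclic Sylow subgroup of A is 𝔘ₛ-quasinormal in G, then G is supersoluble. -/
open scoped Pointwise

universe u

/-- `M` is a maximal subgroup of `K` (within the subgroup lattice of the ambient group). -/
def IsMaximalIn {G : Type*} [Group G] (M K : Subgroup G) : Prop :=
  M < K ∧ ∀ L : Subgroup G, M < L → L ≤ K → L = K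

/-- `P` is a Sylow `p`-subgroup of the subgroup `E`. -/
def IsSylowIn {G : Type*} [Group G] (p : ℕ) (P E : Subgroup G) : Prop :=
  P ≤ E ∧ IsPGroup p P ∧ ¬ p ∣ (P.subgroupOf E).index

/-- `H` is s-permutable in `G`: it permutes with every Sylow subgroup of `G`. -/
def SPermutable {G : Type*} [Group G] (H : Subgroup G) : Prop :=
  ∀ q : ℕ, q.Prime → ∀ Q : Subgroup G, IsSylowIn q Q ⊤ →
    (H : Set G) * (Q : Set G) = (Q : Set G) * (H : Set G)

/-- `A/B` is a chief factor of the ambient group. -/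
def IsChiefFactor {G : Type*} [Group G] (A B : Subgroup G) : Prop :=
  A.Normal ∧ B.Normal ∧ B < A ∧ ∀ L : Subgroup G, L.Normal → B < L → L < A → False

/-- The 𝔘-hypercenter: the product of all normal subgroups `N` such that every chief
factor `A/B` with `A ≤ N` has prime order. -/
def UHypercenter (G : Type*) [Group G] : Subgroup G :=
  sSup {N : Subgroup G | N.Normal ∧
    ∀ A B : Subgroup G, IsChiefFactor A B → A ≤ N → (B.relIndex A).Prime}

/-- The 𝔖-hypercenter: the product of all normal subgroups `N` such that every chief
factor `A/B` with `A ≤ N` is abelian with `G/C_G(A/B)` soluble. -/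
def SHypercenter (G : Type*) [Group G] : Subgroup G :=
  sSup {N : Subgroup G | N.Normal ∧
    ∀ A B : Subgroup G, IsChiefFactor A B → A ≤ N →
      (∀ a ∈ A, ∀ b ∈ A, a * b * a⁻¹ * b⁻¹ ∈ B) ∧
      ∃ C : Subgroup G, ∃ _ : C.Normal,
        (∀ g : G, g ∈ C ↔ ∀ h ∈ A, g * h * g⁻¹ * h⁻¹ ∈ B) ∧ IsSolvable (G ⧸ C)}

/-- `H` is 𝔘ₛ-quasinormal in `G`. -/
def UsQuasinormal {G : Type*} [Group G] (H : Subgroup G) : Prop :=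
  ∃ T : Subgroup G, T.Normal ∧ SPermutable (H ⊔ T) ∧
    ∀ x ∈ H ⊓ T,
      (QuotientGroup.mk x : G ⧸ H.normalCore) ∈ UHypercenter (G ⧸ H.normalCore)

/-- `H` is 𝔖ₛ-quasinormal in `G`. -/
def SsQuasinormal {G : Type*} [Group G] (H : Subgroup G) : Prop :=
  ∃ T : Subgroup G, T.Normal ∧ SPermutable (H ⊔ T) ∧
    ∀ x ∈ H ⊓ T,
      (QuotientGroup.mk x : G ⧸ H.normalCore) ∈ SHypercenter (G ⧸ H.normalCore)

/-- A group is supersoluble if it has a chain of subgroups, each normal in the whole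
group, reaching from `⊥` to `⊤`, with all successive factors cyclic. -/
def IsSupersoluble (G : Type*) [Group G] : Prop :=
  ∃ (k : ℕ) (c : Fin (k + 1) → Subgroup G),
    c 0 = ⊥ ∧ c (Fin.last k) = ⊤ ∧ (∀ i, (c i).Normal) ∧
    (∀ i : Fin k, c i.castSucc ≤ c i.succ) ∧
    ∀ i : Fin k, ∃ g ∈ c i.succ, ∀ x ∈ c i.succ, ∃ m : ℤ, x⁻¹ * g ^ m ∈ c i.castSucc

/-- `A` is subnormal in `G`. -/
def IsSubnormal {G : Type*} [Group G] (A : Subgroup G) : Prop :=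
  ∃ (n : ℕ) (c : Fin (n + 1) → Subgroup G), c 0 = A ∧ c (Fin.last n) = ⊤ ∧
    ∀ i : Fin n, c i.castSucc ≤ c i.succ ∧
      ∀ x ∈ c i.succ, ∀ a ∈ c i.castSucc, x * a * x⁻¹ ∈ c i.castSucc

/-- `H` has a supersoluble supplement in the ambient group. -/
def HasSupersolubleSupplement {G : Type*} [Group G] (H : Subgroup G) : Prop :=
  ∃ T : Subgroup G, IsSupersoluble T ∧ (H : Set G) * (T : Set G) = Set.univ

/-- A group is `p`-nilpotent if it has a normal subgroup of order prime to `p`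
and of `p`-power index (a normal `p`-complement). -/
def IsPNilpotent (p : ℕ) (G : Type*) [Group G] : Prop :=
  ∃ N : Subgroup G, N.Normal ∧ Nat.Coprime (Nat.card N) p ∧ ∃ k : ℕ, N.index = p ^ k

/-- `H` has a `p`-nilpotent supplement in the ambient group. -/
def HasPNilpotentSupplement {G : Type*} [Group G] (p : ℕ) (H : Subgroup G) : Prop :=
  ∃ T : Subgroup G, IsPNilpotent p T ∧ (H : Set G) * (T : Set G) = Set.univ

/-- `H` is an `n`-maximal subgroup of `P`: there is a chain
`H = Hₙ < ⋯ < H₁ < H₀ = P` with each term maximal in the preceding one. -/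
def IsNMaximalIn {G : Type*} [Group G] (n : ℕ) (H P : Subgroup G) : Prop :=
  ∃ c : Fin (n + 1) → Subgroup G, c 0 = P ∧ c (Fin.last n) = H ∧
    ∀ i : Fin n, IsMaximalIn (c i.succ) (c i.castSucc)

/-- A group is quasinilpotent if every element induces an inner automorphism
on every chief factor. -/
def IsQuasinilpotentGroup (G : Type*) [Group G] : Prop :=
  ∀ A B : Subgroup G, IsChiefFactor A B →
    ∀ x : G, ∃ y ∈ A, ∀ h ∈ A, (x * h * x⁻¹) * (y * h * y⁻¹)⁻¹ ∈ B

/-- The generalized Fitting subgroup: the product of all normal quasinilpotent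
subgroups. -/
def generalizedFitting (G : Type*) [Group G] : Subgroup G :=
  sSup {N : Subgroup G | N.Normal ∧ IsQuasinilpotentGroup N}

/-- The generalized Fitting subgroup of a subgroup `H`, as a subgroup of `G`. -/
def FStarIn {G : Type*} [Group G] (H : Subgroup G) : Subgroup G :=
  (generalizedFitting H).map H.subtype

/-- The Fitting subgroup: the product of all nilpotent normal subgroups. -/
def fittingSubgroup (G : Type*) [Group G] : Subgroup G :=
  sSup {N : Subgroup G | N.Normal ∧ Group.IsNilpotent N}

/-- The Fitting subgroup of a subgroup `H`, as a subgroup of `G`. -/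
def FittingIn {G : Type*} [Group G] (H : Subgroup G) : Subgroup G :=
  (fittingSubgroup H).map H.subtype

/-!
The Sylow conditions on `A` and `B` give one on `G`: for each prime, a Sylow subgroup of `G` is
cyclic or all its maximal subgroups are 𝔘ₛ-quasinormal. This passes to quotients, so it suffices to
show that the unique minimal normal subgroup `N` of a minimal counterexample has prime order.

Suppose not; then the 𝔘-hypercenter of `G` is trivial, and a 𝔘ₛ-quasinormal maximal subgroup `M` of
a Sylow subgroup `P` contains `N` or meets it trivially. If, for every `p`, `P` is cyclic or some
such `M` misses `N`, then the Sylow subgroups `P ∩ N` of `N` are cyclic, so `N` is soluble, hence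
cyclic, hence of prime order. Otherwise `N ≤ Φ(P)` for some `p`, whence `N ≤ Φ(G)`. By Gaschütz's
argument nilpotency lifts from `G'N/N` to `G'`, and since every nontrivial Sylow subgroup of `G'` is
then normal in `G` and contains `N`, `G'` is a `p`-group. So the chief factors of `G/N` below its
derived subgroup have order `p` and are centralized by `(p - 1)`-th powers; adjoining these powers
to `G'` therefore gives, in the same way, a normal `p`-subgroup, and such a subgroup centralizes
`N`. Hence every `g` acts on the `𝔽_p`-space `N` by an operator `T` with `T ^ p = T`, which has an
eigenvector; as these operators commute and `N` is irreducible, `g` acts as a scalar, and `|N| = p`.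
-/

section Products

variable {G : Type*} [Group G] {H K L : Subgroup G}

theorem coe_sup_of_mul_comm (h : (H : Set G) * (K : Set G) = (K : Set G) * (H : Set G)) :
    ((H ⊔ K : Subgroup G) : Set G) = (H : Set G) * (K : Set G) := by
  refine Set.Subset.antisymm (fun x hx ↦ ?_) (Set.mul_subset_iff.2 fun a ha b hb ↦
    Subgroup.mul_mem_sup ha hb)
  rw [Subgroup.sup_eq_closure_mul] at hx
  induction hx using Subgroup.closure_induction with
  | mem _ hx => exact hx
  | one => exact ⟨1, H.one_mem, 1, K.one_mem, mul_one 1⟩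
  | mul x y _ _ hx hy =>
    have hsq : (H * K * (H * K) : Set G) = H * K := by
      rw [mul_assoc, ← mul_assoc (K : Set G), ← h, mul_assoc (H : Set G), coe_mul_coe,
        ← mul_assoc, coe_mul_coe]
    exact hsq ▸ Set.mul_mem_mul hx hy
  | inv _ _ hx =>
    have hinv : (H * K : Set G)⁻¹ = H * K := by rw [mul_inv_rev, inv_coe_set, inv_coe_set, h]
    exact hinv ▸ Set.inv_mem_inv.2 hx

theorem relIndex_eq_of_coe_mul_eq (h : (H : Set G) * (K : Set G) = L) :
    H.relIndex L = H.relIndex K := by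
  have hKL : K ≤ L := fun k hk ↦
    SetLike.mem_coe.1 (h ▸ ⟨1, H.one_mem, k, hk, one_mul k⟩)
  refine (Nat.card_congr (Equiv.ofBijective (Subgroup.quotientSubgroupOfEmbeddingOfLE H hKL)
    ⟨(Subgroup.quotientSubgroupOfEmbeddingOfLE H hKL).injective, fun q ↦ ?_⟩)).symm
  obtain ⟨x, rfl⟩ := QuotientGroup.mk_surjective q
  obtain ⟨a, ha, k, hk, hak⟩ : (x : G)⁻¹ ∈ (H : Set G) * (K : Set G) :=
    h ▸ L.inv_mem x.2
  refine ⟨QuotientGroup.mk ⟨k⁻¹, K.inv_mem hk⟩, QuotientGroup.eq.2 ?_⟩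
  rw [Subgroup.mem_subgroupOf, Subgroup.coe_mul, Subgroup.coe_inv, Subgroup.coe_inclusion, inv_inv,
    ← inv_inv (x : G), ← hak]
  simpa using ha

end Products

section Sylow

variable {G : Type*} [Group G] {p q : ℕ}

theorem le_of_isPGroup_of_not_dvd_relIndex [Finite G] [Fact p.Prime] {H K : Subgroup G}
    (hK : IsPGroup p K) (h : ¬ p ∣ H.relIndex K) : K ≤ H := by
  obtain ⟨n, hn⟩ := hK.index (H.subgroupOf K)
  refine Subgroup.relIndex_eq_one.1 (?_ : (H.subgroupOf K).index = 1)
  rcases n.eq_zero_or_pos with rfl | hpos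
  · simpa using hn
  · exact absurd (hn.symm ▸ dvd_pow_self p hpos.ne' : p ∣ (H.subgroupOf K).index) h

theorem isSylowIn_top [Finite G] [Fact q.Prime] (Q : Sylow q G) :
    IsSylowIn q (Q : Subgroup G) ⊤ := by
  refine ⟨le_top, Q.isPGroup', ?_⟩
  change ¬ q ∣ Subgroup.relIndex _ _
  rw [Subgroup.relIndex_top_right]
  exact Q.not_dvd_index

theorem isSylowIn_map_subtype [Finite G] [Fact p.Prime] {E : Subgroup G} (P : Sylow p E) :
    IsSylowIn p ((P : Subgroup E).map E.subtype) E := by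
  refine ⟨Subgroup.map_subtype_le _, P.isPGroup'.map _, ?_⟩
  rw [Subgroup.subgroupOf, Subgroup.comap_map_eq_self_of_injective E.subtype_injective]
  exact P.not_dvd_index

theorem exists_isSylowIn [Finite G] (p : ℕ) [Fact p.Prime] (E : Subgroup G) :
    ∃ P : Subgroup G, IsSylowIn p P E :=
  ⟨_, isSylowIn_map_subtype (Classical.arbitrary (Sylow p E))⟩

theorem IsSylowIn.of_le {R L E : Subgroup G} (hR : IsSylowIn p R E) (hRL : R ≤ L) (hLE : L ≤ E) :
    IsSylowIn p R L := by
  refine ⟨hRL, hR.2.1, fun hdvd ↦ hR.2.2 (hdvd.trans ?_)⟩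
  exact Dvd.intro _ (Subgroup.relIndex_mul_relIndex R L E hRL hLE)

theorem IsSylowIn.normalizer_sup_eq_top [Finite G] [Fact p.Prime] {R L : Subgroup G} [L.Normal]
    (hR : IsSylowIn p R L) : Subgroup.normalizer (R : Set G) ⊔ L = ⊤ := by
  let S : Sylow p L := hR.2.1.comap_subtype.toSylow hR.2.2
  have hS : (S : Subgroup L).map L.subtype = R := Subgroup.map_subgroupOf_eq_of_le hR.1
  exact hS ▸ Sylow.normalizer_sup_eq_top S

theorem IsSylowIn.exists_sylow_eq [Fact q.Prime] {Q E : Subgroup G}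
    (hQ : IsSylowIn q Q E) (hE : ¬ q ∣ E.index) : ∃ S : Sylow q G, (S : Subgroup G) = Q := by
  refine ⟨hQ.2.1.toSylow fun hdvd ↦ ?_, rfl⟩
  rw [← Subgroup.relIndex_mul_index hQ.1] at hdvd
  exact ((Fact.out : q.Prime).dvd_mul.1 hdvd).elim hQ.2.2 hE

theorem not_dvd_relIndex_of_normal [Finite G] [Fact p.Prime] (P : Sylow p G) (T : Subgroup G)
    [T.Normal] : ¬ p ∣ (P : Subgroup G).relIndex T := by
  rw [← relIndex_eq_of_coe_mul_eq (Subgroup.mul_normal (P : Subgroup G) T).symm]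
  exact fun h ↦ P.not_dvd_index (h.trans (Subgroup.relIndex_dvd_index_of_le le_sup_left))

end Sylow

section MaximalSubgroups

variable {G : Type*} [Group G] {M P : Subgroup G} {p : ℕ}

theorem isMaximalIn_iff_covBy : IsMaximalIn M P ↔ M ⋖ P :=
  and_congr_right fun _ ↦ ⟨fun h L hML hLP ↦ hLP.ne (h L hML hLP.le),
    fun h _ hML hLP ↦ hLP.eq_of_not_lt (h hML)⟩

theorem isMaximalIn_iff_isCoatom_subgroupOf (h : M ≤ P) :
    IsMaximalIn M P ↔ IsCoatom (M.subgroupOf P) := by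
  rw [isMaximalIn_iff_covBy, covBy_iff_coatom_Iic h]
  let e : Set.Iic P ≃o Subgroup P := (Subgroup.MapSubtype.orderIso P).symm
  exact (e.isCoatom_iff ⟨M, h⟩).symm

theorem isMaximalIn_map_subtype {K : Subgroup P} (hK : IsCoatom K) :
    IsMaximalIn (K.map P.subtype) P := by
  rw [isMaximalIn_iff_isCoatom_subgroupOf (Subgroup.map_subtype_le K), Subgroup.subgroupOf,
    Subgroup.comap_map_eq_self_of_injective P.subtype_injective]
  exact hK

theorem IsMaximalIn.inf_comap {H : Type*} [Group H] {f : G →* H} {M : Subgroup H}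
    (h : IsMaximalIn M (P.map f)) : IsMaximalIn (P ⊓ M.comap f) P := by
  refine ⟨lt_of_le_of_ne inf_le_left fun e ↦ ?_, fun L hL hLP ↦ le_antisymm hLP fun x hx ↦ ?_⟩
  · exact h.1.not_ge (Subgroup.map_le_iff_le_comap.2 (inf_eq_left.1 e))
  have hML : M ≤ L.map f := fun y hy ↦ by
    obtain ⟨x, hx, rfl⟩ := h.1.le hy
    exact ⟨x, hL.le ⟨hx, hy⟩, rfl⟩
  have hne : M ≠ L.map f := fun e ↦ hL.not_ge (le_inf hLP (Subgroup.map_le_iff_le_comap.1 e.ge))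
  obtain ⟨l, hl, hlx⟩ : f x ∈ L.map f :=
    h.2 _ (lt_of_le_of_ne hML hne) (Subgroup.map_mono hLP) ▸ Subgroup.mem_map_of_mem f hx
  have hker : l⁻¹ * x ∈ P ⊓ M.comap f :=
    ⟨P.mul_mem (P.inv_mem (hLP hl)) hx, by simp [hlx]⟩
  simpa using L.mul_mem hl (hL.le hker)

theorem IsMaximalIn.le_normalizer [Finite G] [Fact p.Prime] (h : IsMaximalIn M P)
    (hP : IsPGroup p P) : P ≤ Subgroup.normalizer (M : Set G) := by
  have := hP.isNilpotent
  exact (Subgroup.normal_subgroupOf_iff_le_normalizer h.1.le).1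
    (Subgroup.NormalizerCondition.normal_of_coatom _
      (Group.normalizerCondition_of_isNilpotent (G := P))
      ((isMaximalIn_iff_isCoatom_subgroupOf h.1.le).1 h))

theorem IsMaximalIn.relIndex_eq [Finite G] [hp : Fact p.Prime] (h : IsMaximalIn M P)
    (hP : IsPGroup p P) : M.relIndex P = p := by
  have hM := (isMaximalIn_iff_isCoatom_subgroupOf h.1.le).1 h
  obtain ⟨n, hn⟩ := IsPGroup.iff_card.1 (hP.to_subgroup (M.subgroupOf P))
  obtain ⟨k, hk⟩ := hP.index (M.subgroupOf P)
  have hk0 : k ≠ 0 := by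
    rintro rfl
    exact hM.1 (Subgroup.index_eq_one.1 (by simpa using hk))
  have hdvd : p ^ (n + 1) ∣ Nat.card P := by
    rw [← Subgroup.card_mul_index (M.subgroupOf P), hn, hk, pow_succ]
    exact mul_dvd_mul_left _ (dvd_pow_self p hk0)
  obtain ⟨K, hK, hMK⟩ := Sylow.exists_subgroup_card_pow_succ hdvd hn
  have hKtop : K = ⊤ := hM.2 K <| lt_of_le_of_ne hMK fun e ↦ by
    rw [← e, hn] at hK
    exact n.succ_ne_self (Nat.pow_right_injective hp.out.two_le hK).symm
  have hmul := Subgroup.card_mul_index (M.subgroupOf P)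
  rw [← Subgroup.card_top (G := P), ← hKtop, hK, hn, pow_succ] at hmul
  exact Nat.eq_of_mul_eq_mul_left (pow_pos hp.out.pos n) hmul

end MaximalSubgroups

section SPermutable

variable {G : Type*} [Group G] [Finite G] {p q : ℕ} {H M : Subgroup G}

theorem SPermutable.mul_comm [hq : Fact q.Prime] (hH : SPermutable H) (Q : Sylow q G) :
    (H : Set G) * ((Q : Subgroup G) : Set G) = ((Q : Subgroup G) : Set G) * (H : Set G) :=
  hH q hq.out Q (isSylowIn_top Q)

theorem SPermutable.le_sylow [Fact p.Prime] (hH : SPermutable H) (hp : IsPGroup p H)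
    (P : Sylow p G) : H ≤ P := by
  refine le_of_isPGroup_of_not_dvd_relIndex hp fun h ↦ P.not_dvd_index ?_
  rw [← relIndex_eq_of_coe_mul_eq (coe_sup_of_mul_comm (hH.mul_comm P).symm).symm] at h
  exact h.trans (Subgroup.relIndex_dvd_index_of_le le_sup_left)

theorem SPermutable.le_normalCore [Fact p.Prime] (hH : SPermutable H) (hp : IsPGroup p H)
    (P : Sylow p G) : H ≤ (P : Subgroup G).normalCore := fun h hh g ↦ by
  have hmem : h ∈ (g⁻¹ • P : Sylow p G) := hH.le_sylow hp _ hh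
  rw [← SetLike.mem_coe, Sylow.coe_smul, Set.mem_smul_set_iff_inv_smul_mem] at hmem
  simpa [← SetLike.mem_coe] using hmem

theorem SPermutable.sylow_le_normalizer [Fact p.Prime] [Fact q.Prime] (hpq : p ≠ q)
    (hH : SPermutable H) (hp : IsPGroup p H) (Q : Sylow q G) :
    (Q : Subgroup G) ≤ Subgroup.normalizer (H : Set G) := by
  obtain ⟨P⟩ : Nonempty (Sylow p G) := inferInstance
  have hcore := hH.le_normalCore hp P
  have hdisj : Disjoint (P : Subgroup G).normalCore (Q : Subgroup G) :=
    (IsPGroup.disjoint_of_ne p q hpq _ _ P.isPGroup' Q.isPGroup').mono_left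
      (Subgroup.normalCore_le _)
  have hconj : ∀ x ∈ (Q : Subgroup G), ∀ h ∈ H, x * h * x⁻¹ ∈ H := fun x hx h hh ↦ by
    have hxh : x * h * x⁻¹ ∈ H ⊔ (Q : Subgroup G) :=
      mul_mem (mul_mem (Subgroup.mem_sup_right hx) (Subgroup.mem_sup_left hh))
        (inv_mem (Subgroup.mem_sup_right hx))
    rw [← SetLike.mem_coe, coe_sup_of_mul_comm (hH.mul_comm Q)] at hxh
    obtain ⟨a, ha, y, hy, hay : a * y = x * h * x⁻¹⟩ := hxh
    have hycore : y ∈ (P : Subgroup G).normalCore :=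
      (Subgroup.mul_mem_cancel_left _ (hcore ha)).1
        (hay ▸ (Subgroup.normalCore_normal _).conj_mem h (hcore hh) x)
    rw [← hay, Subgroup.disjoint_def.1 hdisj hycore hy, mul_one]
    exact ha
  refine fun x hx ↦ Subgroup.mem_normalizer_iff.2 fun h ↦ ⟨hconj x hx h, fun hh ↦ ?_⟩
  simpa [mul_assoc] using hconj x⁻¹ (inv_mem hx) _ hh

theorem eq_top_of_forall_sylow_le
    (h : ∀ q : ℕ, [Fact q.Prime] → ∃ Q : Sylow q G, (Q : Subgroup G) ≤ H) : H = ⊤ := by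
  refine Subgroup.index_eq_one.1 (Nat.eq_one_iff_not_exists_prime_dvd.2 fun q hq hdvd ↦ ?_)
  have : Fact q.Prime := ⟨hq⟩
  obtain ⟨Q, hQ⟩ := h q
  exact Q.not_dvd_index (hdvd.trans (Subgroup.index_dvd_of_le hQ))

theorem SPermutable.normal_of_isMaximalIn [Fact p.Prime] {P : Sylow p G} (hM : SPermutable M)
    (hMP : IsMaximalIn M P) : M.Normal := by
  refine Subgroup.normalizer_eq_top_iff.1 (eq_top_of_forall_sylow_le fun q _ ↦ ?_)
  rcases eq_or_ne p q with rfl | hpq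
  · exact ⟨P, hMP.le_normalizer P.isPGroup'⟩
  · exact ⟨Classical.arbitrary _,
      hM.sylow_le_normalizer hpq (P.isPGroup'.to_le hMP.1.le) (Classical.arbitrary _)⟩

theorem SPermutable.map {K : Type*} [Group K] {f : G →* K} (hf : Function.Surjective f)
    (hH : SPermutable H) : SPermutable (H.map f) := by
  intro q hq Q hQ
  have : Fact q.Prime := ⟨hq⟩
  have : Finite K := Finite.of_surjective f hf
  obtain ⟨Q, rfl⟩ := hQ.exists_sylow_eq (by simpa using hq.ne_one)
  obtain ⟨Q, rfl⟩ := Sylow.mapSurjective_surjective hf q Q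
  rw [Sylow.coe_mapSurjective, Subgroup.coe_map, Subgroup.coe_map, ← Set.image_mul,
    ← Set.image_mul, hH.mul_comm Q]

end SPermutable

section ChiefFactors

variable {G : Type*} [Group G] {A B N : Subgroup G}

theorem isChiefFactor_iff_covBy (hA : A.Normal) (hB : B.Normal) :
    IsChiefFactor A B ↔ (⟨B, hB⟩ : {N : Subgroup G // N.Normal}) ⋖ ⟨A, hA⟩ :=
  ⟨fun h ↦ ⟨h.2.2.1, fun L hBL hLA ↦ h.2.2.2 L L.2 hBL hLA⟩,
    fun h ↦ ⟨hA, hB, h.1, fun L hL hBL hLA ↦ h.2 (c := ⟨L, hL⟩) hBL hLA⟩⟩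

theorem exists_isChiefFactor_le [Finite G] (hA : A.Normal) (hB : B.Normal) (h : B < A) :
    ∃ V ≤ A, IsChiefFactor V B := by
  obtain ⟨V, hBV, hVA⟩ := exists_covBy_le_of_lt (α := {N : Subgroup G // N.Normal})
    (show ⟨B, hB⟩ < ⟨A, hA⟩ from h)
  exact ⟨V, hVA, (isChiefFactor_iff_covBy V.2 hB).2 hBV⟩

theorem exists_le_isChiefFactor [Finite G] (hA : A.Normal) (hB : B.Normal) (h : B < A) :
    ∃ V, B ≤ V ∧ IsChiefFactor A V := by
  obtain ⟨V, hBV, hVA⟩ := exists_le_covBy_of_lt (α := {N : Subgroup G // N.Normal})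
    (show ⟨B, hB⟩ < ⟨A, hA⟩ from h)
  exact ⟨V, hBV, (isChiefFactor_iff_covBy hA V.2).2 hVA⟩

theorem IsChiefFactor.eq_or_eq (h : IsChiefFactor A B) (hN : N.Normal) (hBN : B ≤ N)
    (hNA : N ≤ A) : N = B ∨ N = A := by
  by_contra! hne
  exact h.2.2.2 N hN (hBN.lt_of_ne' hne.1) (hNA.lt_of_ne hne.2)

section Map

variable {H : Type*} [Group H] {f : G →* H}

theorem map_inf_comap (A : Subgroup G) (L : Subgroup H) :
    (A ⊓ L.comap f).map f = A.map f ⊓ L :=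
  SetLike.coe_injective (Set.image_inter_preimage f A L)

theorem IsChiefFactor.map (hf : Function.Surjective f) (h : IsChiefFactor A B)
    (hker : ¬ A ≤ B ⊔ f.ker) : IsChiefFactor (A.map f) (B.map f) := by
  refine ⟨h.1.map f hf, h.2.1.map f hf, lt_of_le_not_ge (Subgroup.map_mono h.2.2.1.le)
    (mt Subgroup.map_le_map_iff.1 hker), fun L hL hBL hLA ↦ ?_⟩
  have hA := h.1
  have hmap : (A ⊓ L.comap f).map f = L := by
    rw [map_inf_comap, inf_eq_right.2 hLA.le]
  rcases h.eq_or_eq (N := A ⊓ L.comap f) inferInstance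
    (le_inf h.2.2.1.le (Subgroup.map_le_iff_le_comap.1 hBL.le)) inf_le_left with e | e
  · exact hBL.ne (e ▸ hmap)
  · exact hLA.ne' (e ▸ hmap)

theorem IsChiefFactor.relIndex_map (h : IsChiefFactor A B) (hker : ¬ A ≤ B ⊔ f.ker) :
    (B.map f).relIndex (A.map f) = B.relIndex A := by
  have hA := h.1
  have hB := h.2.1
  have hinf : (B ⊔ f.ker) ⊓ A = B :=
    (h.eq_or_eq inferInstance (le_inf le_sup_left h.2.2.1.le) inf_le_right).resolve_right
      (mt inf_eq_right.1 hker)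
  have hsup : A ⊔ f.ker = (B ⊔ f.ker) ⊔ A := by
    rw [sup_right_comm, sup_eq_right.2 h.2.2.1.le]
  rw [Subgroup.relIndex_map_map, hsup, Subgroup.relIndex_sup_left, ← Subgroup.inf_relIndex_right,
    hinf]

theorem IsChiefFactor.exists_of_map [Finite G] (hf : Function.Surjective f) (hN : N.Normal)
    {A B : Subgroup H} (h : IsChiefFactor A B) (hAN : A ≤ N.map f) :
    ∃ V D : Subgroup G, V ≤ N ∧ IsChiefFactor V D ∧ D.relIndex V = B.relIndex A := by
  have := h.1
  have := h.2.1
  have hmapB : (N ⊓ B.comap f).map f = B := by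
    rw [map_inf_comap, inf_eq_right.2 (h.2.2.1.le.trans hAN)]
  have hmapA : (N ⊓ A.comap f).map f = A := by
    rw [map_inf_comap, inf_eq_right.2 hAN]
  have hlt : N ⊓ B.comap f < N ⊓ A.comap f :=
    lt_of_le_of_ne (inf_le_inf_left _ (Subgroup.comap_mono h.2.2.1.le))
      fun e ↦ h.2.2.1.ne (by rw [← hmapB, e, hmapA])
  obtain ⟨V, hVA, hV⟩ := exists_isChiefFactor_le inferInstance inferInstance hlt
  have hVB : ¬ V.map f ≤ B := fun hle ↦ hV.2.2.1.not_ge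
    (le_inf (hVA.trans inf_le_left) (Subgroup.map_le_iff_le_comap.1 hle))
  have hmapV : V.map f = A := by
    refine (h.eq_or_eq (hV.1.map f hf) (hmapB ▸ Subgroup.map_mono hV.2.2.1.le)
      (hmapA ▸ Subgroup.map_mono hVA)).resolve_left fun e ↦ hVB e.le
  refine ⟨V, _, hVA.trans inf_le_left, hV, ?_⟩
  rw [← hV.relIndex_map (f := f), hmapV, hmapB]
  rwa [← Subgroup.map_le_map_iff, hmapB]

end Map

end ChiefFactors

section Supersoluble

variable {G : Type*} [Group G]

/-- Every chief factor of `G` has prime order; for finite `G` this is supersolubility, in the form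
suited to arguments about minimal normal subgroups. -/
def ChiefFactorsPrime (G : Type*) [Group G] : Prop :=
  ∀ A B : Subgroup G, IsChiefFactor A B → (B.relIndex A).Prime

theorem exists_forall_inv_mul_zpow_mem {A B : Subgroup G} [B.Normal]
    (h : (B.relIndex A).Prime) : ∃ g ∈ A, ∀ x ∈ A, ∃ m : ℤ, x⁻¹ * g ^ m ∈ B := by
  have : Fact (B.relIndex A).Prime := ⟨h⟩
  have : IsCyclic (A ⧸ B.subgroupOf A) := isCyclic_of_prime_card (p := B.relIndex A) rfl
  obtain ⟨q, hq⟩ := IsCyclic.exists_generator (α := A ⧸ B.subgroupOf A)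
  obtain ⟨g, rfl⟩ := QuotientGroup.mk_surjective q
  refine ⟨g, g.2, fun x hx ↦ ?_⟩
  obtain ⟨m, hm⟩ := hq (QuotientGroup.mk ⟨x, hx⟩)
  exact ⟨m, Subgroup.mem_subgroupOf.1 (QuotientGroup.eq.1 hm.symm)⟩

theorem ChiefFactorsPrime.isSupersoluble [Finite G] (h : ChiefFactorsPrime G) :
    IsSupersoluble G := by
  obtain ⟨c, h0, k, hk, hc⟩ := exists_covBy_seq_of_wellFoundedLT_wellFoundedGT_of_le
    (show (⟨⊥, inferInstance⟩ : {N : Subgroup G // N.Normal}) ≤ ⟨⊤, inferInstance⟩ from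
      bot_le (α := Subgroup G))
  refine ⟨k, fun i ↦ c i, congrArg Subtype.val h0, congrArg Subtype.val hk, fun i ↦ (c i).2,
    fun i ↦ (hc i i.2).le, fun i ↦ ?_⟩
  have := (c i).2
  exact exists_forall_inv_mul_zpow_mem (B := (c i : Subgroup G))
    (h _ _ ((isChiefFactor_iff_covBy (c (i + 1)).2 (c i).2).2 (hc i i.2)))

theorem map_uHypercenter_le [Finite G] {H : Type*} [Group H] {f : G →* H}
    (hf : Function.Surjective f) : (UHypercenter G).map f ≤ UHypercenter H := by
  refine Subgroup.map_le_iff_le_comap.2 (sSup_le fun N hN ↦ Subgroup.map_le_iff_le_comap.1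
    (le_sSup ⟨hN.1.map f hf, fun A B hAB hA ↦ ?_⟩))
  obtain ⟨V, D, hVN, hVD, hcard⟩ := hAB.exists_of_map hf hN.1 hA
  exact hcard ▸ hN.2 V D hVD hVN

end Supersoluble

section UsQuasinormal

variable {G H : Type*} [Group G] [Group H] {f : G →* H} {p : ℕ}

theorem map_sylow_inf_normal [Finite G] [Fact p.Prime] (hf : Function.Surjective f) (P : Sylow p G)
    (T : Subgroup G) [T.Normal] :
    ((P : Subgroup G) ⊓ T).map f = (P : Subgroup G).map f ⊓ T.map f := by
  have := Finite.of_surjective f hf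
  have hle := Subgroup.map_inf_le (P : Subgroup G) T f
  refine hle.antisymm (le_of_isPGroup_of_not_dvd_relIndex ((P.isPGroup'.map f).to_le inf_le_left)
    fun h ↦ not_dvd_relIndex_of_normal P T ?_)
  calc p ∣ (((P : Subgroup G) ⊓ T).map f).relIndex (T.map f) :=
        h.trans (Dvd.intro _ (Subgroup.relIndex_mul_relIndex _ _ _ hle inf_le_right))
    _ = ((((P : Subgroup G) ⊓ T).map f).comap f).relIndex T := (Subgroup.relIndex_comap _ f T).symm
    _ ∣ ((P : Subgroup G) ⊓ T).relIndex T :=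
        Subgroup.relIndex_dvd_of_le_left T (Subgroup.le_comap_map f _)
    _ = (P : Subgroup G).relIndex T := Subgroup.inf_relIndex_right _ T

theorem UsQuasinormal.map [Finite G] [Fact p.Prime] (hf : Function.Surjective f) {P : Sylow p G}
    {M : Subgroup G} (hMP : M ≤ P) (hker : f.ker ⊓ P ≤ M) (hM : UsQuasinormal M) :
    UsQuasinormal (M.map f) := by
  obtain ⟨T, hT, hperm, hhyp⟩ := hM
  refine ⟨T.map f, hT.map f hf, Subgroup.map_sup M T f ▸ hperm.map hf, fun x hx ↦ ?_⟩
  have hcore : M.normalCore ≤ (M.map f).normalCore.comap f := by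
    have := M.normalCore_normal.map f hf
    exact Subgroup.map_le_iff_le_comap.1
      (Subgroup.normal_le_normalCore.2 (Subgroup.map_mono M.normalCore_le))
  obtain ⟨y, ⟨hyP, hyT⟩, rfl⟩ : x ∈ ((P : Subgroup G) ⊓ T).map f :=
    map_sylow_inf_normal hf P T ▸ ⟨Subgroup.map_mono hMP hx.1, hx.2⟩
  obtain ⟨m, hm, hmy⟩ := hx.1
  have hyM : y ∈ M := by
    have hker' : m⁻¹ * y ∈ f.ker := by simp [hmy]
    have hmem := hker ⟨hker', P.mul_mem (P.inv_mem (hMP hm)) hyP⟩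
    simpa using M.mul_mem hm hmem
  exact map_uHypercenter_le
    (QuotientGroup.map_surjective_of_surjective _ _ f (QuotientGroup.mk_surjective.comp hf) hcore)
    ⟨_, hhyp y ⟨hyM, hyT⟩, rfl⟩

theorem UsQuasinormal.exists_of_normalCore_eq_bot [Finite G] {M : Subgroup G}
    (hM : UsQuasinormal M) (hcore : M.normalCore = ⊥) :
    ∃ T : Subgroup G, T.Normal ∧ SPermutable (M ⊔ T) ∧ M ⊓ T ≤ UHypercenter G := by
  obtain ⟨T, hT, hperm, hhyp⟩ := hM
  refine ⟨T, hT, hperm, fun x hx ↦ ?_⟩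
  let e : G ⧸ M.normalCore →* G := QuotientGroup.lift _ (MonoidHom.id G) (hcore ▸ bot_le)
  have he : Function.Surjective e := fun g ↦ ⟨QuotientGroup.mk g, rfl⟩
  exact map_uHypercenter_le he ⟨_, hhyp x hx, rfl⟩

/-- For every prime, some (by conjugacy, every) Sylow subgroup of `G` is cyclic or has all its
maximal subgroups 𝔘ₛ-quasinormal in `G`: the hypothesis that the induction on `|G|` carries. -/
def SylowMaximalsUsQuasinormal (G : Type*) [Group G] : Prop :=
  ∀ p : ℕ, p.Prime → ∃ P : Sylow p G,
    IsCyclic (P : Subgroup G) ∨ ∀ M : Subgroup G, IsMaximalIn M P → UsQuasinormal M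

theorem SylowMaximalsUsQuasinormal.map [Finite G] (hf : Function.Surjective f)
    (hG : SylowMaximalsUsQuasinormal G) : SylowMaximalsUsQuasinormal H := fun p hp ↦ by
  have : Fact p.Prime := ⟨hp⟩
  obtain ⟨P, hP⟩ := hG p hp
  have hmap : (P.mapSurjective hf : Subgroup H) = (P : Subgroup G).map f := rfl
  refine ⟨P.mapSurjective hf, hP.imp
    (fun _ : IsCyclic (P : Subgroup G) ↦ isCyclic_of_surjective _ (f.subgroupMap_surjective P))
    fun hmax M hM ↦ ?_⟩
  have hM' : ((P : Subgroup G) ⊓ M.comap f).map f = M := by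
    rw [map_inf_comap, ← hmap, inf_eq_right.2 hM.1.le]
  refine hM' ▸ (hmax _ (IsMaximalIn.inf_comap hM)).map hf inf_le_left ?_
  exact le_inf inf_le_right (inf_le_left.trans (Subgroup.comap_mono bot_le))

end UsQuasinormal

section Monolith

variable {G : Type*} [Group G] {N : Subgroup G} {p : ℕ}

/-- `N` is the least nontrivial normal subgroup of `G`, so `G` is monolithic with monolith `N`. -/
def IsMonolith (N : Subgroup G) : Prop :=
  IsLeast {K : Subgroup G | K.Normal ∧ K ≠ ⊥} N

theorem IsMonolith.isChiefFactor (hN : IsMonolith N) : IsChiefFactor N ⊥ :=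
  ⟨hN.1.1, inferInstance, bot_lt_iff_ne_bot.2 hN.1.2,
    fun _ hL hbot hLN ↦ hLN.not_ge (hN.2 ⟨hL, hbot.ne'⟩)⟩

theorem IsMonolith.uHypercenter_eq_bot (hN : IsMonolith N) (hcard : ¬ (Nat.card N).Prime) :
    UHypercenter G = ⊥ := by
  refine sSup_eq_bot.2 fun K hK ↦ ?_
  by_contra hbot
  exact hcard (Subgroup.relIndex_bot_left N ▸ hK.2 N ⊥ hN.isChiefFactor (hN.2 ⟨hK.1, hbot⟩))

theorem IsMonolith.normalCore_eq_bot (hN : IsMonolith N) {M : Subgroup G} (hNM : ¬ N ≤ M) :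
    M.normalCore = ⊥ := by
  by_contra hbot
  exact hNM ((hN.2 ⟨M.normalCore_normal, hbot⟩).trans M.normalCore_le)

variable [Finite G]

theorem IsMonolith.disjoint_of_usQuasinormal [Fact p.Prime] (hN : IsMonolith N)
    (hcard : ¬ (Nat.card N).Prime) {P : Sylow p G} {M : Subgroup G} (hMP : IsMaximalIn M P)
    (hM : UsQuasinormal M) (hNM : ¬ N ≤ M) : Disjoint M N := by
  obtain ⟨T, hT, hperm, hMT⟩ := hM.exists_of_normalCore_eq_bot (hN.normalCore_eq_bot hNM)
  rw [hN.uHypercenter_eq_bot hcard, ← disjoint_iff_inf_le] at hMT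
  rcases eq_or_ne T ⊥ with rfl | hTbot
  · rw [sup_bot_eq] at hperm
    have hMbot : M = ⊥ := by
      by_contra hbot
      exact hNM (hN.2 ⟨hperm.normal_of_isMaximalIn hMP, hbot⟩)
    exact hMbot ▸ disjoint_bot_left
  · exact hMT.mono_right (hN.2 ⟨hT, hTbot⟩)

theorem isCyclic_inf_of_disjoint [hp : Fact p.Prime] {P M : Subgroup G} (hP : IsPGroup p P)
    (hMP : IsMaximalIn M P) (hMN : Disjoint M N) : IsCyclic ↥(P ⊓ N) := by
  obtain ⟨k, hk⟩ := IsPGroup.iff_card.1 (hP.to_le (inf_le_left : P ⊓ N ≤ P))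
  have hcard : p ^ k = M.relIndex (P ⊓ N) := by
    rw [← hk, ← Subgroup.inf_relIndex_right, (hMN.mono_right inf_le_right).eq_bot,
      Subgroup.relIndex_bot_left]
  have hle : p ^ k ≤ p ^ 1 := by
    rw [hcard, pow_one, ← hMP.relIndex_eq hP]
    exact Subgroup.relIndex_le_of_le_right inf_le_left Subgroup.FiniteIndex.index_ne_zero
  refine isCyclic_of_card_dvd_prime (p := p) ?_
  rw [hk]
  exact pow_dvd_pow p ((Nat.pow_le_pow_iff_right hp.out.one_lt).1 hle) |>.trans (pow_one p).dvd

theorem le_map_frattini_of_forall_isMaximalIn {P : Subgroup G} (hP : P ≠ ⊥)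
    (h : ∀ M, IsMaximalIn M P → N ≤ M) : N ≤ (frattini P).map P.subtype := fun x hx ↦ by
  have hmem : ∀ K : Subgroup P, IsCoatom K → x ∈ K.map P.subtype := fun K hK ↦
    h _ (isMaximalIn_map_subtype hK) hx
  have := P.nontrivial_iff_ne_bot.2 hP
  obtain ⟨K, hK, -⟩ := (eq_top_or_exists_le_coatom (⊥ : Subgroup P)).resolve_left bot_ne_top
  obtain ⟨y, -, rfl⟩ := hmem K hK
  refine ⟨y, Subgroup.mem_iInf.2 fun L ↦ Subgroup.mem_iInf.2 fun hL ↦ ?_, rfl⟩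
  exact (Subgroup.mem_map_iff_mem P.subtype_injective).1 (hmem L hL)

theorem IsMonolith.isCyclic_inf_or_le_frattini [Fact p.Prime] (hN : IsMonolith N)
    (hcard : ¬ (Nat.card N).Prime) {P : Sylow p G}
    (hP : IsCyclic (P : Subgroup G) ∨ ∀ M, IsMaximalIn M (P : Subgroup G) → UsQuasinormal M) :
    IsCyclic ↥((P : Subgroup G) ⊓ N) ∨
      N ≤ (frattini (P : Subgroup G)).map (P : Subgroup G).subtype := by
  rw [or_iff_not_imp_left]
  intro hcyc
  have hPcyc : ¬ IsCyclic (P : Subgroup G) := fun _ ↦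
    hcyc (isCyclic_of_injective _ (Subgroup.inclusion_injective inf_le_left))
  refine le_map_frattini_of_forall_isMaximalIn (fun hbot ↦ hcyc ?_) fun M hM ↦ ?_
  · rw [hbot, bot_inf_eq]
    infer_instance
  · by_contra hNM
    exact hcyc (isCyclic_inf_of_disjoint P.isPGroup' hM
      (hN.disjoint_of_usQuasinormal hcard hM (hP.resolve_left hPcyc M hM) hNM))

end Monolith

section MinimalNormal

variable {G : Type*} [Group G] {N : Subgroup G}

theorem IsChiefFactor.isMulCommutative [Group.IsSolvable N] (h : IsChiefFactor N ⊥) :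
    IsMulCommutative N := by
  have := h.1
  have : Nontrivial N := N.nontrivial_iff_ne_bot.2 h.2.2.1.ne'
  have hlt : ⁅N, N⁆ < N := by
    rw [← Subgroup.map_subtype_commutator]
    conv_rhs => rw [← N.range_subtype, MonoidHom.range_eq_map]
    exact Subgroup.map_subtype_lt_map_subtype.2
      (Group.IsSolvable.commutator_lt_top_of_nontrivial N)
  exact Subgroup.commutator_self_eq_bot_iff.1
    ((h.eq_or_eq inferInstance bot_le hlt.le).resolve_right hlt.ne)

variable [Finite G]

theorem IsChiefFactor.prime_card_of_forall_conj_mem_zpowers (h : IsChiefFactor N ⊥)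
    (hconj : ∀ g : G, ∀ n ∈ N, g * n * g⁻¹ ∈ Subgroup.zpowers n) : (Nat.card N).Prime := by
  obtain ⟨p, hp, hdvd⟩ := Nat.exists_prime_and_dvd (n := Nat.card N)
    fun h1 ↦ h.2.2.1.ne' (Subgroup.card_eq_one.1 h1)
  have : Fact p.Prime := ⟨hp⟩
  obtain ⟨x, hx⟩ := exists_prime_orderOf_dvd_card' p hdvd
  have hle : Subgroup.zpowers (x : G) ≤ N := Subgroup.zpowers_le.2 x.2
  have hnormal : (Subgroup.zpowers (x : G)).Normal :=
    ⟨fun y hy g ↦ Subgroup.zpowers_le.2 hy (hconj g y (hle hy))⟩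
  have hcard : Nat.card (Subgroup.zpowers (x : G)) = p := by
    rw [Nat.card_zpowers, Subgroup.orderOf_coe, hx]
  rcases h.eq_or_eq hnormal bot_le hle with e | e
  · exact absurd (hcard.symm.trans (Subgroup.card_eq_one.2 e)) hp.ne_one
  · exact e ▸ hcard.symm ▸ hp

theorem IsChiefFactor.prime_card_of_isCyclic [IsCyclic N] (h : IsChiefFactor N ⊥) :
    (Nat.card N).Prime := by
  have := h.1
  refine h.prime_card_of_forall_conj_mem_zpowers fun g n hn ↦ ?_
  obtain ⟨m, hm⟩ := MonoidHom.map_cyclic (MulAut.conjNormal g : N ≃* N).toMonoidHom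
  exact ⟨m, (congrArg Subtype.val (hm ⟨n, hn⟩)).symm⟩

theorem IsChiefFactor.isCyclic_of_isZGroup [IsZGroup N] (h : IsChiefFactor N ⊥) :
    IsCyclic N := by
  have : Group.IsNilpotent N :=
    ⟨1, Subgroup.upperCentralSeries_one_eq_top_iff.2 h.isMulCommutative⟩
  infer_instance

theorem isZGroup_of_forall_isCyclic_sylow_inf [N.Normal]
    (h : ∀ p : ℕ, p.Prime → ∃ P : Sylow p G, IsCyclic ↥((P : Subgroup G) ⊓ N)) : IsZGroup N := by
  refine ⟨fun p hp S ↦ ?_⟩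
  have : Fact p.Prime := ⟨hp⟩
  obtain ⟨P, hP⟩ := h p hp
  let R : Sylow p N := IsPGroup.toSylow (P := (P : Subgroup G).subgroupOf N)
    P.isPGroup'.comap_subtype (not_dvd_relIndex_of_normal P N)
  have hR : IsCyclic ((P : Subgroup G).subgroupOf N) := by
    rw [← Subgroup.inf_subgroupOf_right]
    exact (Subgroup.subgroupOfEquivOfLe inf_le_right).isCyclic.2 hP
  exact (R.equiv S).isCyclic.1 hR

end MinimalNormal

section Frattini

variable {G : Type*} [Group G] [Finite G] {p : ℕ}

theorem le_frattini_of_le_map_frattini {H N : Subgroup G} [N.Normal]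
    (h : N ≤ (frattini H).map H.subtype) : N ≤ frattini G := by
  refine le_iInf₂ fun K hK ↦ ?_
  by_contra hNK
  have hsup : K ⊔ N = ⊤ := hK.2 _ (left_lt_sup.2 hNK)
  have htop : K.subgroupOf H ⊔ frattini H = ⊤ := by
    refine eq_top_iff.2 fun x _ ↦ ?_
    have hx : (x : G) ∈ K ⊔ N := hsup ▸ Subgroup.mem_top (x : G)
    obtain ⟨k, hk, n, hn, hkn⟩ := Subgroup.mem_sup_of_normal_right.1 hx
    obtain ⟨m, hm, rfl⟩ := h hn
    have hxm : x * m⁻¹ ∈ K.subgroupOf H := by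
      rw [Subgroup.mem_subgroupOf, Subgroup.coe_mul, ← hkn]
      simpa using hk
    exact inv_mul_cancel_right x m ▸ Subgroup.mul_mem_sup hxm hm
  have hHK : H ≤ K := Subgroup.subgroupOf_eq_top.1 (frattini_nongenerating htop)
  exact hNK ((h.trans (Subgroup.map_subtype_le _)).trans hHK)

theorem isNilpotent_iff_forall_sylow_normal : Group.IsNilpotent G ↔
    ∀ (p : ℕ) (_ : Fact p.Prime) (P : Sylow p G), (P : Subgroup G).Normal :=
  Group.isNilpotent_of_finite_tfae.out 0 3

theorem normal_map_subtype_sylow [Fact p.Prime] {H : Subgroup G} [H.Normal] [Group.IsNilpotent H]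
    (P : Sylow p H) : ((P : Subgroup H).map H.subtype).Normal := by
  have := P.characteristic_of_normal
    (isNilpotent_iff_forall_sylow_normal.1 inferInstance p inferInstance P)
  infer_instance

theorem isNilpotent_of_isNilpotent_map {Q : Type*} [Group Q] {f : G →* Q}
    (hf : Function.Surjective f) (hker : f.ker ≤ frattini G) {H : Subgroup G} [H.Normal]
    (hH : Group.IsNilpotent (H.map f)) : Group.IsNilpotent H := by
  have := Finite.of_surjective f hf
  have : (H.map f).Normal := Subgroup.Normal.map inferInstance f hf
  refine isNilpotent_iff_forall_sylow_normal.2 fun p hp P ↦ ?_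
  have hP := isSylowIn_map_subtype P
  set R := (P : Subgroup H).map H.subtype
  have hRmap : (R.map f).Normal := by
    convert normal_map_subtype_sylow (P.mapSurjective (f.subgroupMap_surjective H)) using 1
    rw [Sylow.coe_mapSurjective, Subgroup.map_map, Subgroup.map_map]
    rfl
  let L := H ⊓ (R.map f).comap f
  have hRL : R ≤ L := le_inf hP.1 (Subgroup.le_comap_map f R)
  have hLR : L ≤ R ⊔ f.ker := inf_le_right.trans (Subgroup.comap_map_eq f R).le
  have hnormalizer : Subgroup.normalizer (R : Set G) ⊔ frattini G = ⊤ := by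
    rw [eq_top_iff, ← (hP.of_le hRL inf_le_left).normalizer_sup_eq_top]
    exact sup_le le_sup_left (hLR.trans (sup_le_sup Subgroup.le_normalizer hker))
  have hR : R.Normal := Subgroup.normalizer_eq_top_iff.1 (frattini_nongenerating hnormalizer)
  exact hR.of_map_subtype

end Frattini

section Nilpotent

variable {G : Type*} [Group G] [Finite G] {p : ℕ}

theorem IsMonolith.isPGroup_of_isNilpotent [Fact p.Prime] {N H : Subgroup G} [H.Normal]
    [Group.IsNilpotent H] (hN : IsMonolith N) (hNp : IsPGroup p N) : IsPGroup p H := by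
  refine IsPGroup.of_card
    (Nat.eq_prime_pow_of_unique_prime_dvd Nat.card_pos.ne' fun {r} hr hdvd ↦ ?_)
  by_contra hne
  have : Fact r.Prime := ⟨hr⟩
  obtain ⟨R⟩ : Nonempty (Sylow r H) := inferInstance
  have hbot : (R : Subgroup H).map H.subtype ≠ ⊥ := by
    rw [Ne, Subgroup.map_eq_bot_iff_of_injective _ H.subtype_injective]
    exact R.ne_bot_of_dvd_card hdvd
  have hle := hN.2 ⟨normal_map_subtype_sylow R, hbot⟩
  exact hN.1.2 (disjoint_self.1
    ((IsPGroup.disjoint_of_ne r p hne _ _ (R.isPGroup'.map _) hNp).mono_left hle))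

theorem isNilpotent_of_forall_isChiefFactor {K : Subgroup G} [K.Normal]
    (h : ∀ A B, IsChiefFactor A B → A ≤ ⁅K, K⁆ → ⁅A, K⁆ ≤ B) : Group.IsNilpotent K := by
  rw [Subgroup.isNilpotent_iff_lowerCentralSeries]
  by_contra! hbot
  refine not_strictAnti_of_wellFoundedLT (fun n ↦ K.lowerCentralSeries (n + 1))
    (strictAnti_nat_of_succ_lt fun n ↦
      (K.lowerCentralSeries_antitone n.succ.le_succ).lt_of_ne fun hstable ↦ ?_)
  obtain ⟨V, -, hV⟩ := exists_le_isChiefFactor (A := K.lowerCentralSeries (n + 1))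
    inferInstance inferInstance (bot_lt_iff_ne_bot.2 (hbot _))
  refine hV.2.2.1.not_ge ?_
  rw [← hstable]
  exact h _ _ hV (K.lowerCentralSeries_antitone (Nat.le_add_left 1 n))

end Nilpotent

section ConjugationAction

variable {G : Type*} [Group G] {N K : Subgroup G} {p : ℕ}

theorem ker_conjNormal [N.Normal] :
    (MulAut.conjNormal : G →* MulAut N).ker = Subgroup.centralizer (N : Set G) := by
  ext g
  simp only [MonoidHom.mem_ker, MulEquiv.ext_iff, Subtype.ext_iff, MulAut.conjNormal_apply,
    MulAut.one_apply, Subtype.forall, Subgroup.mem_centralizer_iff, mul_inv_eq_iff_eq_mul,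
    SetLike.mem_coe]
  exact forall₂_congr fun _ _ ↦ eq_comm

theorem IsChiefFactor.monoidHom_eq_of_apply_eq [N.Normal] (h : IsChiefFactor N ⊥) {φ ψ : N →* N}
    (hφ : ∀ (g : G) (n : N), φ (MulAut.conjNormal g n) = MulAut.conjNormal g (φ n))
    (hψ : ∀ (g : G) (n : N), ψ (MulAut.conjNormal g n) = MulAut.conjNormal g (ψ n))
    {v : N} (hv : v ≠ 1) (hφψ : φ v = ψ v) : φ = ψ := by
  have hnormal : ((φ.eqLocus ψ).map N.subtype).Normal := by
    refine ⟨?_⟩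
    rintro _ ⟨n, hn, rfl⟩ g
    exact ⟨MulAut.conjNormal g n, (hφ g n).trans ((congrArg _ hn).trans (hψ g n).symm), rfl⟩
  have hbot : (φ.eqLocus ψ).map N.subtype ≠ ⊥ := fun hbot ↦ hv <| Subtype.ext <|
    (Subgroup.eq_bot_iff_forall _).1 hbot v ⟨v, hφψ, rfl⟩
  have htop := (h.eq_or_eq hnormal bot_le (Subgroup.map_subtype_le _)).resolve_left hbot
  refine MonoidHom.ext fun n ↦ ?_
  obtain ⟨m, hm, hmn⟩ := htop.ge n.2
  exact Subtype.ext hmn ▸ hm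

variable [Fact p.Prime]

theorem IsChiefFactor.dvd_card (h : IsChiefFactor N ⊥) (hN : IsPGroup p N) : p ∣ Nat.card N :=
  hN.card_eq_or_dvd.resolve_left (mt Subgroup.card_eq_one.1 h.2.2.1.ne')

variable [Finite G]

theorem IsChiefFactor.le_centralizer_of_isPGroup [K.Normal] (h : IsChiefFactor N ⊥)
    (hN : IsPGroup p N) (hK : IsPGroup p K) : K ≤ Subgroup.centralizer (N : Set G) := by
  have := h.1
  let _ : MulAction K N := MulAction.compHom N ((MulAut.conjNormal : G →* MulAut N).comp K.subtype)
  obtain ⟨b, hb, hb1⟩ := hK.exists_fixed_point_of_prime_dvd_card_of_fixed_point N (h.dvd_card hN)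
    (a := 1) fun k ↦ map_one (MulAut.conjNormal (k : G))
  have hbot : N ⊓ Subgroup.centralizer (K : Set G) ≠ ⊥ := fun hbot ↦ hb1 <| Subtype.ext <| .symm <|
    (Subgroup.eq_bot_iff_forall _).1 hbot b ⟨b.2, Subgroup.mem_centralizer_iff.2 fun k hk ↦
      mul_inv_eq_iff_eq_mul.1 (congrArg Subtype.val (hb ⟨k, hk⟩))⟩
  exact Subgroup.le_centralizer_iff.1
    (inf_eq_left.1 ((h.eq_or_eq inferInstance bot_le inf_le_left).resolve_left hbot))

open scoped IsMulCommutative in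
theorem IsChiefFactor.pow_eq_one (h : IsChiefFactor N ⊥) (hN : IsPGroup p N) (n : N) :
    n ^ p = 1 := by
  have := h.1
  have := hN.isNilpotent
  have := h.isMulCommutative
  obtain ⟨x, hx⟩ := exists_prime_orderOf_dvd_card' p (h.dvd_card hN)
  have hpow : powMonoidHom p = (1 : N →* N) :=
    h.monoidHom_eq_of_apply_eq (fun g m ↦ (map_pow (MulAut.conjNormal g) m p).symm)
      (fun g _ ↦ (map_one (MulAut.conjNormal g)).symm) (v := x)
      (fun hx1 ↦ (Fact.out : p.Prime).ne_one (by rw [← hx, hx1, orderOf_one]))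
      (hx ▸ pow_orderOf_eq_one x)
  exact DFunLike.congr_fun hpow n

end ConjugationAction

section Eigenvectors

open Polynomial in
theorem exists_hasEigenvector_of_pow_card_eq_self {K V : Type*} [Field K] [Finite K]
    [AddCommGroup V] [Module K V] [Module.Finite K V] [Nontrivial V] {f : Module.End K V}
    (hf : f ^ Nat.card K = f) : ∃ c v, f.HasEigenvector c v := by
  have hdvd : minpoly K f ∣ X ^ Nat.card K - X := minpoly.dvd _ _ (by simp [hf])
  have hsplits : (minpoly K f).Splits := splits_X_pow_nat_card_sub_X.of_dvd
    (FiniteField.X_pow_card_sub_X_ne_zero _ Finite.one_lt_card) hdvd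
  obtain ⟨c, hc⟩ := hsplits.exists_eval_eq_zero
    (minpoly.degree_pos (Algebra.IsIntegral.isIntegral f)).ne'
  exact ⟨c, (Module.End.hasEigenvalue_of_isRoot hc).exists_hasEigenvector⟩

theorem exists_ne_one_apply_eq_pow {p : ℕ} [Fact p.Prime] {W : Type*} [CommGroup W] [Finite W]
    [Nontrivial W] (hW : ∀ x : W, x ^ p = 1) {f : W →* W} (hf : ∀ x, f^[p] x = f x) :
    ∃ (k : ℕ) (v : W), v ≠ 1 ∧ f v = v ^ k := by
  have : Module (ZMod p) (Additive W) := AddCommGroup.zmodModule hW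
  let F : Module.End (ZMod p) (Additive W) := (MonoidHom.toAdditive f).toZModLinearMap p
  have hF : F ^ Nat.card (ZMod p) = F := by
    refine LinearMap.ext fun x ↦ ?_
    rw [Nat.card_zmod, Module.End.pow_apply]
    exact hf x
  obtain ⟨c, v, hv⟩ := exists_hasEigenvector_of_pow_card_eq_self hF
  refine ⟨c.val, v.toMul, hv.2, ?_⟩
  have hc : c • v = c.val • v := by rw [← Nat.cast_smul_eq_nsmul (ZMod p), ZMod.natCast_zmod_val]
  exact hv.apply_eq_smul.trans hc

end Eigenvectors

section AbelianPowerResidual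

/-- The residual of `G` for the class of abelian groups of exponent dividing `n`, that is, the least
normal subgroup with quotient in this class. For `n = p - 1` it centralizes every normal subgroup of
prime order `p`, which is how it detects supersolubility. -/
def abelianPowerResidual (G : Type*) [Group G] (n : ℕ) : Subgroup G :=
  commutator G ⊔ Subgroup.closure (Set.range (· ^ n))

variable {G G' : Type*} [Group G] [Group G'] {n : ℕ}

instance : (abelianPowerResidual G n).Normal :=
  .of_commutator_le _ le_sup_left

theorem commutator_le_abelianPowerResidual : commutator G ≤ abelianPowerResidual G n :=
  le_sup_left

theorem pow_mem_abelianPowerResidual (g : G) : g ^ n ∈ abelianPowerResidual G n :=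
  Subgroup.mem_sup_right (Subgroup.subset_closure ⟨g, rfl⟩)

theorem abelianPowerResidual_le_ker {M : Type*} [CommGroup M] (hM : ∀ m : M, m ^ n = 1)
    (f : G →* M) : abelianPowerResidual G n ≤ f.ker := by
  refine sup_le (Abelianization.commutator_subset_ker f) ((Subgroup.closure_le _).2 ?_)
  rintro _ ⟨g, rfl⟩
  exact (map_pow f g n).trans (hM (f g))

theorem map_abelianPowerResidual {f : G →* G'} (hf : Function.Surjective f) :
    (abelianPowerResidual G n).map f = abelianPowerResidual G' n := by
  have hrange : f '' Set.range (· ^ n) = Set.range (· ^ n) := by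
    rw [← Set.range_comp, ← hf.range_comp]
    exact congrArg Set.range (funext fun g ↦ map_pow f g n)
  rw [abelianPowerResidual, abelianPowerResidual, Subgroup.map_sup, MonoidHom.map_closure, hrange,
    map_commutator_eq, MonoidHom.range_eq_top.2 hf, commutator_def]

theorem abelianPowerResidual_le_centralizer {N : Subgroup G} [N.Normal]
    (hN : (Nat.card N).Prime) :
    abelianPowerResidual G (Nat.card N - 1) ≤ Subgroup.centralizer (N : Set G) := by
  have : Fact (Nat.card N).Prime := ⟨hN⟩
  have : IsCyclic N := isCyclic_of_prime_card rfl
  let e : MulAut N →* (ZMod (Nat.card N))ˣ := IsCyclic.mulAutMulEquiv N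
  have hker := abelianPowerResidual_le_ker (n := Nat.card N - 1)
    (fun m : (ZMod (Nat.card N))ˣ ↦ ZMod.units_pow_card_sub_one_eq_one _ m)
    (e.comp (MulAut.conjNormal (H := N)))
  rwa [MonoidHom.ker_comp_of_injective _ e (IsCyclic.mulAutMulEquiv N).injective,
    ker_conjNormal] at hker

theorem commutator_abelianPowerResidual_le {A B : Subgroup G} [A.Normal] [B.Normal]
    (h : (B.relIndex A).Prime) : ⁅A, abelianPowerResidual G (B.relIndex A - 1)⁆ ≤ B := by
  let f := QuotientGroup.mk' B
  have hf : Function.Surjective f := QuotientGroup.mk'_surjective B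
  have hcard : Nat.card (A.map f) = B.relIndex A := by
    rw [← Subgroup.relIndex_ker, QuotientGroup.ker_mk']
  have : (A.map f).Normal := ‹A.Normal›.map f hf
  have hcentral := abelianPowerResidual_le_centralizer (hcard ▸ h)
  rw [hcard, Subgroup.le_centralizer_iff, ← Subgroup.commutator_eq_bot_iff_le_centralizer,
    ← map_abelianPowerResidual hf, ← Subgroup.map_commutator, Subgroup.map_eq_bot_iff,
    QuotientGroup.ker_mk'] at hcentral
  exact hcentral

variable [Finite G]

theorem ChiefFactorsPrime.isNilpotent_commutator (h : ChiefFactorsPrime G) :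
    Group.IsNilpotent (commutator G) :=
  isNilpotent_of_forall_isChiefFactor fun A B hAB _ ↦
    have := hAB.1
    have := hAB.2.1
    (Subgroup.commutator_mono le_rfl commutator_le_abelianPowerResidual).trans
      (commutator_abelianPowerResidual_le (h A B hAB))

theorem ChiefFactorsPrime.isNilpotent_abelianPowerResidual {p : ℕ} [Fact p.Prime]
    (h : ChiefFactorsPrime G) (hp : IsPGroup p (commutator G)) :
    Group.IsNilpotent (abelianPowerResidual G (p - 1)) := by
  refine isNilpotent_of_forall_isChiefFactor fun A B hAB hA ↦ ?_
  have := hAB.1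
  have := hAB.2.1
  have hAp : IsPGroup p A := hp.to_le (hA.trans (Subgroup.commutator_mono le_top le_top))
  have hrelIndex : B.relIndex A = p := by
    obtain ⟨k, hk⟩ := hAp.index (B.subgroupOf A)
    exact (Nat.prime_dvd_prime_iff_eq (h A B hAB) Fact.out).1
      ((h A B hAB).dvd_of_dvd_pow hk.dvd)
  exact hrelIndex ▸ commutator_abelianPowerResidual_le (h A B hAB)

end AbelianPowerResidual

section PrimeOrder

variable {G : Type*} [Group G] [Finite G] {N : Subgroup G} {p : ℕ} [Fact p.Prime]

open scoped IsMulCommutative in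
theorem IsChiefFactor.prime_card_of_abelianPowerResidual_le (h : IsChiefFactor N ⊥)
    (hN : IsPGroup p N)
    (hcentral : abelianPowerResidual G (p - 1) ≤ Subgroup.centralizer (N : Set G)) :
    (Nat.card N).Prime := by
  have := h.1
  have := hN.isNilpotent
  have := h.isMulCommutative
  have : Nontrivial N := (Subgroup.nontrivial_iff_ne_bot N).2 h.2.2.1.ne'
  rw [← ker_conjNormal] at hcentral
  have hcomm (g x : G) (n : N) : MulAut.conjNormal g (MulAut.conjNormal x n) =
      MulAut.conjNormal x (MulAut.conjNormal g n) := by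
    have := hcentral (commutator_le_abelianPowerResidual (Subgroup.commutator_mem_commutator
      (Subgroup.mem_top g) (Subgroup.mem_top x)))
    rw [MonoidHom.mem_ker, map_commutatorElement, commutatorElement_eq_one_iff_mul_comm] at this
    exact DFunLike.congr_fun this n
  refine h.prime_card_of_forall_conj_mem_zpowers fun g ↦ ?_
  let f : N →* N := (MulAut.conjNormal g).toMonoidHom
  have hpow : (MulAut.conjNormal g : MulAut N) ^ p = MulAut.conjNormal g := by
    rw [← map_pow, ← mul_pow_sub_one (Fact.out : p.Prime).ne_zero, map_mul,
      hcentral (pow_mem_abelianPowerResidual g), mul_one]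
  have hiterate (n : N) : f^[p] n = f n := by
    have := hom_coe_pow (fun e : MulAut N ↦ ⇑e) rfl (fun _ _ ↦ rfl) (MulAut.conjNormal g) p
    exact (congrFun this n).symm.trans (DFunLike.congr_fun hpow n)
  obtain ⟨k, v, hv, hgv⟩ := exists_ne_one_apply_eq_pow (h.pow_eq_one hN) hiterate
  have hfpow : f = powMonoidHom k :=
    h.monoidHom_eq_of_apply_eq (fun x n ↦ hcomm g x n)
      (fun x n ↦ (map_pow (MulAut.conjNormal x) n k).symm) hv hgv
  intro n hn
  exact ⟨k, by simpa using! congrArg Subtype.val (DFunLike.congr_fun hfpow ⟨n, hn⟩).symm⟩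

theorem IsMonolith.prime_card_of_le_frattini [N.Normal] (hN : IsMonolith N) (hNp : IsPGroup p N)
    (hNΦ : N ≤ frattini G) (h : ChiefFactorsPrime (G ⧸ N)) : (Nat.card N).Prime := by
  let f := QuotientGroup.mk' N
  have hf : Function.Surjective f := QuotientGroup.mk'_surjective N
  have hker : f.ker ≤ frattini G := (QuotientGroup.ker_mk' N).trans_le hNΦ
  have hmap : (commutator G).map f = commutator (G ⧸ N) := by
    rw [map_commutator_eq, MonoidHom.range_eq_top.2 hf, commutator_def]
  have : Group.IsNilpotent (commutator G) :=
    isNilpotent_of_isNilpotent_map hf hker (hmap ▸ h.isNilpotent_commutator)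
  have hcommutator : IsPGroup p (commutator (G ⧸ N)) :=
    hmap ▸ (hN.isPGroup_of_isNilpotent hNp).map f
  have : Group.IsNilpotent (abelianPowerResidual G (p - 1)) :=
    isNilpotent_of_isNilpotent_map hf hker
      (map_abelianPowerResidual hf ▸ h.isNilpotent_abelianPowerResidual hcommutator)
  exact hN.isChiefFactor.prime_card_of_abelianPowerResidual_le hNp
    (hN.isChiefFactor.le_centralizer_of_isPGroup hNp (hN.isPGroup_of_isNilpotent hNp))

end PrimeOrder

section Induction

variable {G : Type*} [Group G] [Finite G] {N : Subgroup G}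

theorem IsMonolith.prime_card [N.Normal] (hN : IsMonolith N) (hG : SylowMaximalsUsQuasinormal G)
    (h : ChiefFactorsPrime (G ⧸ N)) : (Nat.card N).Prime := by
  by_contra hcard
  by_cases hcyc : ∀ p : ℕ, p.Prime → ∃ P : Sylow p G, IsCyclic ↥((P : Subgroup G) ⊓ N)
  · have := isZGroup_of_forall_isCyclic_sylow_inf hcyc
    have := hN.isChiefFactor.isCyclic_of_isZGroup
    exact hcard hN.isChiefFactor.prime_card_of_isCyclic
  · push Not at hcyc
    obtain ⟨p, hp, hPN⟩ := hcyc
    have : Fact p.Prime := ⟨hp⟩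
    obtain ⟨P, hP⟩ := hG p hp
    have hNΦ : N ≤ (frattini (P : Subgroup G)).map (P : Subgroup G).subtype :=
      (hN.isCyclic_inf_or_le_frattini hcard hP).resolve_left (hPN P)
    have hNp : IsPGroup p N := P.isPGroup'.to_le (hNΦ.trans (Subgroup.map_subtype_le _))
    exact hcard (hN.prime_card_of_le_frattini hNp (le_frattini_of_le_map_frattini hNΦ) h)

theorem SylowMaximalsUsQuasinormal.chiefFactorsPrime (hG : SylowMaximalsUsQuasinormal G) :
    ChiefFactorsPrime G := by
  induction hcard : Nat.card G using Nat.strong_induction_on generalizing G with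
  | _ n ih =>
    have hquot (K : Subgroup G) [K.Normal] (hK : K ≠ ⊥) : ChiefFactorsPrime (G ⧸ K) := by
      refine ih _ ?_ (hG.map (QuotientGroup.mk'_surjective K)) rfl
      rw [← hcard, K.card_eq_card_quotient_mul_card_subgroup]
      exact lt_mul_of_one_lt_right Nat.card_pos ((Subgroup.one_lt_card_iff_ne_bot K).2 hK)
    intro A B hAB
    by_cases hAK : ∃ K : Subgroup G, K.Normal ∧ K ≠ ⊥ ∧ ¬ A ≤ B ⊔ K
    · obtain ⟨K, hK, hKbot, hAK⟩ := hAK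
      rw [← QuotientGroup.ker_mk' K] at hAK
      exact hAB.relIndex_map hAK ▸
        hquot K hKbot _ _ (hAB.map (QuotientGroup.mk'_surjective K) hAK)
    · push Not at hAK
      obtain rfl : B = ⊥ := by
        by_contra hB
        exact hAB.2.2.1.not_ge (sup_idem B ▸ hAK B hAB.2.1 hB)
      have hA : IsMonolith A :=
        ⟨⟨hAB.1, hAB.2.2.1.ne'⟩, fun K hK ↦ bot_sup_eq K ▸ hAK K hK.1 hK.2⟩
      have := hAB.1
      exact A.relIndex_bot_left.symm ▸ hA.prime_card hG (hquot A hAB.2.2.1.ne')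

end Induction

theorem stmt_1_general {G : Type*} [Group G] [Finite G] (A B : Subgroup G)
    (hAB : (A : Set G) * (B : Set G) = Set.univ)
    (hBhall : Nat.Coprime (Nat.card B) B.index)
    (hBcyc : ∀ q : ℕ, q.Prime → ∀ Q : Subgroup G, IsSylowIn q Q B → IsCyclic Q)
    (hyp : ∀ p : ℕ, p.Prime → ∀ P : Subgroup G, IsSylowIn p P A → ¬ IsCyclic P →
      ∀ M : Subgroup G, IsMaximalIn M P → UsQuasinormal M) :
    IsSupersoluble G := by
  have hindex : A.index ∣ Nat.card B := by
    rw [← A.relIndex_top_right, relIndex_eq_of_coe_mul_eq (hAB.trans Subgroup.coe_top.symm)]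
    exact A.relIndex_dvd_card B
  suffices hG : SylowMaximalsUsQuasinormal G from hG.chiefFactorsPrime.isSupersoluble
  intro p hp
  have : Fact p.Prime := ⟨hp⟩
  by_cases hpB : p ∣ Nat.card B
  · obtain ⟨Q, hQ⟩ := exists_isSylowIn p B
    obtain ⟨P, rfl⟩ := hQ.exists_sylow_eq (Nat.not_coprime_of_dvd_of_dvd hp.one_lt hpB · hBhall)
    exact ⟨P, .inl (hBcyc p hp P hQ)⟩
  · obtain ⟨Q, hQ⟩ := exists_isSylowIn p A
    obtain ⟨P, rfl⟩ := hQ.exists_sylow_eq (mt (·.trans hindex) hpB)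
    exact ⟨P, or_iff_not_imp_left.2 (hyp p hp P hQ)⟩

/-- If `G = AB` with `A` subnormal and `B` a supersoluble Hall subgroup
all of whose Sylow subgroups are cyclic, and every maximal subgroup of every
non-cyclic Sylow subgroup of `A` is 𝔘ₛ-quasinormal in `G`, then `G` is supersoluble. -/
theorem stmt_1 {G : Type*} [Group G] [Finite G] (A B : Subgroup G)
    (hAB : (A : Set G) * (B : Set G) = Set.univ)
    (hA : IsSubnormal A)
    (hBsupersoluble : IsSupersoluble B)
    (hBhall : Nat.Coprime (Nat.card B) B.index)
    (hBcyc : ∀ q : ℕ, q.Prime → ∀ Q : Subgroup G, IsSylowIn q Q B → IsCyclic Q)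
    (hyp : ∀ p : ℕ, p.Prime → ∀ P : Subgroup G, IsSylowIn p P A → ¬ IsCyclic P →
      ∀ M : Subgroup G, IsMaximalIn M P → UsQuasinormal M) :
    IsSupersoluble G :=
  stmt_1_general A B hAB hBhall hBcyc hyp
end

section
/- Let G be a finite group and p a prime divisor of |G| such that gcd(|G|, (p−1)(p²−1)⋯(pⁿ−1)) = 1 for some integer n ≥ 1. Let P be a Sylow p-subgroup of G, and suppose that every n-maximal subgroup of P (if any exists) has a p-nilpotent supplement in G. Then G is p-nilpotent. -/
open scoped Pointwise

universe u

/-!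
By Tate's theorem, `G` is `p`-nilpotent as soon as the focal subgroup of a Sylow `p`-subgroup `P`
is contained in `P'`. For the proof of that theorem, put `Q = P ⊓ O^p(G)` and `R = ⁅Q, P⁆`. The
focal subgroup contains `Q`, so `Q ≤ P'` and `P / R` is a central extension of
`P / Q ≃ G / O^p(G)` with kernel in `(P / R)'`. Transfer to `P` lifts `G → P / Q` to `G → P / R`;
the lift is surjective because the kernel lies in the Frattini subgroup, hence it kills `O^p(G)`,
and `Q = R`. As `P` is nilpotent, `Q = 1`.

If `|P| < p ^ n`, a `p'`-automorphism of a `p`-subgroup `U` of prime order `q` has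
`q ∣ p ^ i - 1` for some `i < n`; so all quotients `N(U) / C(U)` are `p`-groups, and then elements
of `P` that are conjugate in `G` are already conjugate in `P`.

If `p ^ n ≤ |P|`, every maximal subgroup `M` of `P` has a `p`-nilpotent supplement, whose normal
`p`-complement `K` is a complement of `P` in `G`. Every `t ∈ P` normalizing `K` has transfer
`t ^ |G : P|` in `P / P'`, and some such `t` is not in `M`. Hence the transfer maps `P` onto
`P / P'`, so its kernel, which contains the focal subgroup, meets `P` in `P'`.
-/

/-- The `p`-residual `O^p(G)`, generated by the elements of order prime to `p`; in a finite group
it is the smallest normal subgroup whose index is a power of `p`. -/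
def pResidual (p : ℕ) (G : Type*) [Group G] : Subgroup G :=
  Subgroup.normalClosure {x | (orderOf x).Coprime p}

instance pResidual_normal (p : ℕ) (G : Type*) [Group G] : (pResidual p G).Normal :=
  Subgroup.normalClosure_normal

theorem pResidual_le_ker {p : ℕ} {G A : Type*} [Group G] [Group A]
    (hA : IsPGroup p A) (f : G →* A) : pResidual p G ≤ f.ker := by
  refine Subgroup.normalClosure_le_normal fun x hx => f.mem_ker.2 ?_
  obtain ⟨k, hk⟩ := hA (f x)
  rw [← orderOf_eq_one_iff]
  exact Nat.eq_one_of_dvd_coprimes (Nat.Coprime.pow_right k hx)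
    (orderOf_map_dvd f x) (orderOf_dvd_of_pow_eq_one hk)

theorem isPGroup_quotient_pResidual {p : ℕ} (hp : p.Prime) (G : Type*) [Group G] [Finite G] :
    IsPGroup p (G ⧸ pResidual p G) := by
  rintro ⟨x⟩
  refine ⟨(orderOf x).factorization p, (QuotientGroup.eq_one_iff _).2
    (Subgroup.subset_normalClosure ?_)⟩
  rw [Set.mem_ofPred_eq, orderOf_pow_of_dvd (pow_ne_zero _ hp.ne_zero) (Nat.ordProj_dvd _ _)]
  exact (Nat.coprime_ordCompl hp (orderOf_pos x).ne').symm

theorem coprime_index_sylow {p : ℕ} [hp : Fact p.Prime] {G : Type*} [Group G] [Finite G]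
    (P : Sylow p G) : p.Coprime (P : Subgroup G).index :=
  hp.out.coprime_iff_not_dvd.2 P.not_dvd_index

theorem sylow_mul_eq_univ {p : ℕ} [Fact p.Prime] {G : Type*} [Group G] [Finite G]
    (P : Sylow p G) {K : Subgroup G} [K.Normal] {k : ℕ} (hK : K.index = p ^ k) :
    (P : Set G) * (K : Set G) = Set.univ := by
  have hcop : (P : Subgroup G).index.Coprime K.index :=
    hK ▸ ((coprime_index_sylow P).pow_left k).symm
  have hsup : (P : Subgroup G) ⊔ K = ⊤ := Subgroup.index_eq_one.1 (Nat.eq_one_of_dvd_coprimes hcop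
    (Subgroup.index_dvd_of_le le_sup_left) (Subgroup.index_dvd_of_le le_sup_right))
  exact (Subgroup.mul_normal (P : Subgroup G) K).symm.trans (congrArg SetLike.coe hsup)

theorem isPNilpotent_of_disjoint_pResidual {p : ℕ} [hp : Fact p.Prime] {G : Type*} [Group G]
    [Finite G] (P : Sylow p G) (h : Disjoint (P : Subgroup G) (pResidual p G)) :
    IsPNilpotent p G := by
  obtain ⟨k, hk⟩ := (isPGroup_quotient_pResidual hp.out G).exists_card_eq
  have hcompl : (P : Subgroup G).IsComplement' (pResidual p G) :=
    Subgroup.isComplement'_of_disjoint_and_mul_eq_univ h (sylow_mul_eq_univ P hk)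
  refine ⟨pResidual p G, inferInstance, ?_, k, hk⟩
  rw [← hcompl.symm.index_eq_card]
  exact (coprime_index_sylow P).symm

theorem exists_retraction_of_coprime_index {A E : Type*} [CommGroup A] [Group E]
    {ι : A →* E} (hι : ι.range ≤ Subgroup.center E) {S : Subgroup E} [S.FiniteIndex]
    (hS : ι.range ≤ S) (hcop : (Nat.card A).Coprime S.index) (ψ : S →* A)
    (hψ : ∀ a, ψ ⟨ι a, hS ⟨a, rfl⟩⟩ = a) : ∃ r : E →* A, ∀ a, r (ι a) = a := by
  have htransfer (a : A) : ψ.transfer (ι a) = a ^ S.index := by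
    have hpow : (⟨ι a ^ S.index, pow_mem (hS ⟨a, rfl⟩) _⟩ : S) = ⟨ι a, hS ⟨a, rfl⟩⟩ ^ S.index := rfl
    rw [MonoidHom.transfer_eq_pow, hpow, map_pow, hψ]
    intro k x _
    have hmem : ι a ^ k ∈ Subgroup.center E := pow_mem (hι ⟨a, rfl⟩) k
    rw [mul_assoc, ← Subgroup.mem_center_iff.1 hmem x, inv_mul_cancel_left]
  let powEquiv : A ≃* A :=
    MulEquiv.ofBijective (powMonoidHom S.index) (powCoprime hcop).bijective
  refine ⟨powEquiv.symm.toMonoidHom.comp ψ.transfer, fun a => ?_⟩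
  change powEquiv.symm (ψ.transfer (ι a)) = a
  rw [htransfer, MulEquiv.symm_apply_eq]
  rfl

theorem exists_section_of_retraction {E G : Type*} [Group E] [Group G] {f : E →* G}
    (hf : Function.Surjective f) (r : E →* f.ker) (hr : ∀ a : f.ker, r a = a) :
    ∃ s : G →* E, ∀ g, f (s g) = g := by
  have hbij : Function.Bijective (f.comp r.ker.subtype) := by
    refine ⟨(injective_iff_map_eq_one _).2 fun x hx => ?_, fun g => ?_⟩
    · have hrx : r x = ⟨x, hx⟩ := hr ⟨x, hx⟩
      exact Subtype.ext (congrArg (fun a : f.ker => (a : E)) (hrx.symm.trans x.2))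
    · obtain ⟨x, rfl⟩ := hf g
      have hker : x * (r x : E)⁻¹ ∈ r.ker := by
        rw [r.mem_ker, map_mul, map_inv, hr, mul_inv_cancel]
      refine ⟨⟨x * (r x : E)⁻¹, hker⟩, ?_⟩
      rw [MonoidHom.comp_apply, Subgroup.subtype_apply, map_mul, map_inv, (r x).2, inv_one, mul_one]
  let e := MulEquiv.ofBijective _ hbij
  exact ⟨r.ker.subtype.comp e.symm.toMonoidHom, e.apply_symm_apply⟩

/-- On the preimage of `P`, a section `σ` of `f` over `P` gives a retraction `x ↦ x * σ(f x)⁻¹`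
onto the central kernel. -/
theorem exists_section_of_central_ker {E G : Type*} [Group E] [Group G] {f : E →* G}
    (hf : Function.Surjective f) (hcentral : f.ker ≤ Subgroup.center E) (P : Subgroup G)
    [P.FiniteIndex] (hcop : (Nat.card f.ker).Coprime P.index) (σ : P →* E) (hσ : ∀ x, f (σ x) = x) :
    ∃ s : G →* E, ∀ g, f (s g) = g := by
  let : CommGroup f.ker :=
    { mul_comm := fun a b => Subtype.ext (Subgroup.mem_center_iff.1 (hcentral b.2) a) }
  let S := P.comap f
  have hindex : S.index = P.index := P.index_comap_of_surjective hf
  have : S.FiniteIndex := ⟨hindex ▸ Subgroup.FiniteIndex.index_ne_zero⟩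
  let fS : S →* P := f.subgroupComap P
  have hmem (x : S) : (x : E) * (σ (fS x))⁻¹ ∈ f.ker := by
    rw [f.mem_ker, map_mul, map_inv, hσ]
    exact mul_inv_cancel (f x)
  let ψ : S →* f.ker := MonoidHom.mk' (fun x => ⟨x * (σ (fS x))⁻¹, hmem x⟩) fun x y =>
    Subtype.ext <| by
      have hcomm := Subgroup.mem_center_iff.1 (hcentral (hmem y)) (σ (fS x))⁻¹
      simp only [map_mul, mul_inv_rev, Subgroup.coe_mul, mul_assoc] at hcomm ⊢
      rw [hcomm]
  have hker : f.ker.subtype.range ≤ S := by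
    rw [Subgroup.range_subtype]
    exact fun x hx => show f x ∈ P from f.mem_ker.1 hx ▸ P.one_mem
  obtain ⟨r, hr⟩ := exists_retraction_of_coprime_index (f.ker.range_subtype.trans_le hcentral)
    hker (hindex ▸ hcop) ψ fun a => Subtype.ext <| by
      have hfa : fS ⟨a, hker ⟨a, rfl⟩⟩ = 1 := Subtype.ext a.2
      change (a : E) * (σ (fS ⟨a, _⟩))⁻¹ = a
      rw [hfa, map_one, inv_one, mul_one]
  exact exists_section_of_retraction hf r hr

theorem index_eq_of_isCoatom {p : ℕ} [hp : Fact p.Prime] {Q : Type*} [Group Q] [Finite Q]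
    (hQ : IsPGroup p Q) {M : Subgroup Q} (hM : IsCoatom M) : M.index = p := by
  obtain ⟨m, hm⟩ := (hQ.to_subgroup M).exists_card_eq
  obtain ⟨k, hk⟩ := hQ.index M
  have hcard : Nat.card Q = p ^ (m + k) := by rw [← M.card_mul_index, hm, hk, pow_add]
  have hk0 : k ≠ 0 := by
    rintro rfl
    exact hM.1 (Subgroup.index_eq_one.1 hk)
  have hdvd : p ^ (m + 1) ∣ Nat.card Q := hcard ▸ pow_dvd_pow p (by lia)
  obtain ⟨L, hL, hML⟩ := Sylow.exists_subgroup_card_pow_prime_le p hdvd M hm m.le_succ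
  have hlt : M < L := hML.lt_of_ne fun h => by
    rw [← h, hm] at hL
    exact absurd (Nat.pow_right_injective hp.out.two_le hL) (by lia)
  rw [hM.2 L hlt, Subgroup.card_top, hcard] at hL
  have : m + k = m + 1 := Nat.pow_right_injective hp.out.two_le hL
  rw [hk, show k = 1 by lia, pow_one]

theorem commutator_le_of_isCoatom {N : Type*} [Group N] [Group.IsNilpotent N] {M : Subgroup N}
    (hM : IsCoatom M) : commutator N ≤ M := by
  have : M.Normal := Subgroup.NormalizerCondition.normal_of_coatom M
    Group.normalizerCondition_of_isNilpotent hM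
  obtain ⟨g, hg⟩ : ∃ g, g ∉ M := by
    by_contra! h
    exact hM.1 ((Subgroup.eq_top_iff' M).2 h)
  have hsup : M ⊔ Subgroup.zpowers g = ⊤ := hM.2 _ (left_lt_sup.2 fun h =>
    hg (h (Subgroup.mem_zpowers g)))
  exact Subgroup.Normal.commutator_le_of_self_sup_commutative_eq_top hsup inferInstance

theorem eq_top_of_sup_commutator_eq_top {N : Type*} [Group N] [Group.IsNilpotent N]
    [IsCoatomic (Subgroup N)] {K : Subgroup N} (hK : K ⊔ commutator N = ⊤) : K = ⊤ := by
  refine (eq_top_or_exists_le_coatom K).resolve_right ?_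
  rintro ⟨M, hM, hKM⟩
  exact hM.1 (top_le_iff.1 (hK ▸ sup_le hKM (commutator_le_of_isCoatom hM)))

open scoped commutatorElement in
theorem eq_bot_of_le_commutator_top {N : Type*} [Group N] [Group.IsNilpotent N] {Q : Subgroup N}
    (hQ : Q ≤ ⁅Q, ⊤⁆) : Q = ⊥ := by
  obtain ⟨n, hn⟩ := Subgroup.nilpotent_iff_lowerCentralSeries.1 ‹Group.IsNilpotent N›
  have hle (k : ℕ) : Q ≤ Subgroup.lowerCentralSeries ⊤ k := by
    induction k with
    | zero => exact le_top
    | succ k ih => exact hQ.trans (Subgroup.commutator_mono ih le_rfl)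
  exact le_bot_iff.1 (hn ▸ hle n)

/-- The fibre product `{(g, b) | q g = π b}` is a central extension of `G`, and `β` splits it
over `P`. -/
theorem exists_lift_of_central_ker {G B D : Type*} [Group G] [Group B] [Group D] (q : G →* D)
    {π : B →* D} (hπ : Function.Surjective π) (hcentral : π.ker ≤ Subgroup.center B)
    (P : Subgroup G) [P.FiniteIndex] (hcop : (Nat.card π.ker).Coprime P.index) (β : P →* B)
    (hβ : ∀ x, π (β x) = q x) : ∃ θ : G →* B, ∀ g, π (θ g) = q g := by
  let E := (q.comp (MonoidHom.fst G B)).eqLocus (π.comp (MonoidHom.snd G B))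
  let f : E →* G := (MonoidHom.fst G B).comp E.subtype
  have hf : Function.Surjective f := fun g =>
    (hπ (q g)).elim fun b hb => ⟨⟨(g, b), hb.symm⟩, rfl⟩
  have hfst (x : f.ker) : x.1.1.1 = 1 := x.2
  have hsnd (x : f.ker) : x.1.1.2 ∈ π.ker :=
    x.1.2.symm.trans ((congrArg q (hfst x)).trans q.map_one)
  have hf_central : f.ker ≤ Subgroup.center E := fun x hx => by
    refine Subgroup.mem_center_iff.2 fun y => Subtype.ext (Prod.ext ?_ ?_)
    · change y.1.1 * x.1.1 = x.1.1 * y.1.1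
      rw [hfst ⟨x, hx⟩, mul_one, one_mul]
    · exact Subgroup.mem_center_iff.1 (hcentral (hsnd ⟨x, hx⟩)) y.1.2
  have hker_card : Nat.card f.ker ∣ Nat.card π.ker := by
    let sndKer : f.ker →* π.ker :=
      ((MonoidHom.snd G B).comp (E.subtype.comp f.ker.subtype)).codRestrict π.ker hsnd
    refine Subgroup.card_dvd_of_injective sndKer fun x y hxy => ?_
    exact Subtype.ext (Subtype.ext (Prod.ext ((hfst x).trans (hfst y).symm)
      (congrArg Subtype.val hxy)))
  let σ : P →* E := (P.subtype.prod β).codRestrict E fun x => (hβ x).symm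
  obtain ⟨s, hs⟩ := exists_section_of_central_ker hf hf_central P
    (hcop.coprime_dvd_left hker_card) σ fun _ => rfl
  refine ⟨((MonoidHom.snd G B).comp E.subtype).comp s, fun g => ?_⟩
  have hmem : q (s g).1.1 = π (s g).1.2 := (s g).2
  exact hmem.symm.trans (congrArg q (hs g))

theorem surjective_of_comp_surjective_of_ker_le_commutator {G B D : Type*} [Group G] [Group B]
    [Group D] [Group.IsNilpotent B] [IsCoatomic (Subgroup B)] {θ : G →* B} {π : B →* D}
    (hsurj : Function.Surjective (π.comp θ)) (hker : π.ker ≤ commutator B) :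
    Function.Surjective θ := by
  refine MonoidHom.range_eq_top.1 (eq_top_of_sup_commutator_eq_top
    ((Subgroup.eq_top_iff' _).2 fun b => ?_))
  obtain ⟨g, hg⟩ := hsurj (π b)
  have hmem : (θ g)⁻¹ * b ∈ π.ker := by
    rw [π.mem_ker, map_mul, map_inv, ← hg]
    exact inv_mul_cancel _
  exact mul_inv_cancel_left (θ g) b ▸ Subgroup.mul_mem_sup ⟨g, rfl⟩ (hker hmem)

section Tate

variable {p : ℕ} [hp : Fact p.Prime] {G : Type*} [Group G] [Finite G] (P : Sylow p G)

theorem pResidual_subgroupOf_le_focalSubgroupOf :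
    (pResidual p G).subgroupOf P ≤ (P : Subgroup G).focalSubgroupOf := by
  intro x hx
  have hker := pResidual_le_ker (P.2.to_quotient _) (Subgroup.transferFocal (P : Subgroup G)) hx
  rwa [← Subgroup.ker_restrict_transferFocal_eq_focalSubgroupOf P]

theorem injective_of_central_ker_le_commutator {B : Type*} [Group B] [Finite B]
    (hB : IsPGroup p B) {π : B →* G ⧸ pResidual p G} (hπ : Function.Surjective π)
    (hcentral : π.ker ≤ Subgroup.center B) (hcomm : π.ker ≤ commutator B) (β : P →* B)
    (hβ : ∀ x : P, π (β x) = (x : G)) : Function.Injective π := by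
  have := hB.isNilpotent
  obtain ⟨k, hk⟩ := (hB.to_subgroup π.ker).exists_card_eq
  obtain ⟨θ, hθ⟩ := exists_lift_of_central_ker (QuotientGroup.mk' (pResidual p G)) hπ hcentral
    (P : Subgroup G) (hk ▸ (coprime_index_sylow P).pow_left k) β hβ
  have hθ_surj : Function.Surjective θ := by
    have hπθ : π.comp θ = QuotientGroup.mk' (pResidual p G) := MonoidHom.ext hθ
    exact surjective_of_comp_surjective_of_ker_le_commutator
      (hπθ ▸ QuotientGroup.mk'_surjective _) hcomm
  refine (injective_iff_map_eq_one π).2 fun b hb => ?_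
  obtain ⟨g, rfl⟩ := hθ_surj b
  rw [hθ] at hb
  exact pResidual_le_ker hB θ ((QuotientGroup.eq_one_iff g).1 hb)

open scoped commutatorElement in
theorem pResidual_subgroupOf_le_commutator
    (h : (pResidual p G).subgroupOf P ≤ commutator P) :
    (pResidual p G).subgroupOf P ≤ ⁅(pResidual p G).subgroupOf P, ⊤⁆ := by
  set Q := (pResidual p G).subgroupOf P
  let R := ⁅Q, (⊤ : Subgroup P)⁆
  have hRQ : R ≤ Q := Subgroup.commutator_le_left _ _
  let π : P ⧸ R →* G ⧸ pResidual p G := QuotientGroup.map R _ (P : Subgroup G).subtype hRQ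
  have hker : π.ker = Q.map (QuotientGroup.mk' R) := QuotientGroup.ker_map _ _ _ _
  obtain ⟨k, hk⟩ := (isPGroup_quotient_pResidual hp.out G).exists_card_eq
  have hπ : Function.Surjective π := by
    rintro ⟨g⟩
    obtain ⟨x, hx, a, ha, rfl⟩ : g ∈ (P : Set G) * (pResidual p G : Set G) :=
      sylow_mul_eq_univ P hk ▸ Set.mem_univ g
    exact ⟨QuotientGroup.mk' R ⟨x, hx⟩, QuotientGroup.eq.2 ((inv_mul_cancel_left x a).symm ▸ ha)⟩
  have hcentral : π.ker ≤ Subgroup.center (P ⧸ R) := by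
    rw [hker, ← Subgroup.commutator_top_right_eq_bot_iff_le_center,
      ← Subgroup.map_top_of_surjective _ (QuotientGroup.mk'_surjective R),
      ← Subgroup.map_commutator, Subgroup.map_eq_bot_iff, QuotientGroup.ker_mk']
  have hcomm : π.ker ≤ commutator (P ⧸ R) := by
    rw [hker]
    refine (Subgroup.map_mono h).trans ?_
    rw [map_commutator_eq]
    exact Subgroup.commutator_mono le_top le_top
  have hinj := injective_of_central_ker_le_commutator P (P.2.to_quotient R) hπ hcentral hcomm
    (QuotientGroup.mk' R) fun _ => rfl
  intro x hx
  exact (QuotientGroup.eq_one_iff x).1 ((injective_iff_map_eq_one π).1 hinj _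
    ((QuotientGroup.eq_one_iff (x : G)).2 hx))

/-- **Tate's theorem**. -/
theorem isPNilpotent_of_focalSubgroupOf_le_commutator
    (h : (P : Subgroup G).focalSubgroupOf ≤ commutator P) : IsPNilpotent p G := by
  have := P.2.isNilpotent
  refine isPNilpotent_of_disjoint_pResidual P (Subgroup.subgroupOf_eq_bot.1 ?_).symm
  exact eq_bot_of_le_commutator_top (pResidual_subgroupOf_le_commutator P
    ((pResidual_subgroupOf_le_focalSubgroupOf P).trans h))

end Tate

theorem lt_inf_normalizer {G : Type*} [Group G] {D P : Subgroup G} [Group.IsNilpotent P]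
    (h : D < P) : D < P ⊓ Subgroup.normalizer (D : Set G) := by
  have hlt : D.subgroupOf P < ⊤ :=
    lt_top_iff_ne_top.2 fun htop => h.not_ge (Subgroup.subgroupOf_eq_top.1 htop)
  obtain ⟨x, hx, hxD⟩ :=
    SetLike.exists_of_lt (Group.normalizerCondition_of_isNilpotent _ hlt)
  rw [← Subgroup.subgroupOf_normalizer_eq h.le] at hx
  exact lt_of_le_not_ge (le_inf h.le Subgroup.le_normalizer) fun hle => hxD (hle ⟨x.2, hx⟩)

theorem exists_mem_smul_sylow_eq {p : ℕ} [Fact p.Prime] {H : Type*} [Group H] [Finite H]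
    {C : Subgroup H} [C.Normal] {k : ℕ} (hC : C.index = p ^ k) (P Q : Sylow p H) :
    ∃ a ∈ C, a • P = Q := by
  obtain ⟨g, rfl⟩ := MulAction.exists_smul_eq H P Q
  obtain ⟨x, hx, a, ha, hxa⟩ : g⁻¹ ∈ (P : Set H) * (C : Set H) :=
    sylow_mul_eq_univ P hC ▸ Set.mem_univ g⁻¹
  have hxP : x⁻¹ • P = P := Sylow.smul_eq_iff_mem_normalizer.2 (Subgroup.le_normalizer (inv_mem hx))
  have hg : g = a⁻¹ * x⁻¹ := by rw [← mul_inv_rev, ← inv_inv g]; exact congrArg _ hxa.symm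
  exact ⟨a⁻¹, inv_mem ha, by rw [hg, mul_smul, hxP]⟩

section Frobenius

variable {p : ℕ} [Fact p.Prime] {G : Type*} [Group G] [Finite G]

theorem exists_mem_centralizer_le_smul {D A B : Subgroup G}
    (hD : IsPGroup p D.normalizerMonoidHom.range) (hA : IsPGroup p A) (hB : IsPGroup p B)
    (hAD : A ≤ Subgroup.normalizer (D : Set G)) (hBD : B ≤ Subgroup.normalizer (D : Set G)) :
    ∃ a ∈ Subgroup.centralizer (D : Set G), ∃ R : Sylow p G,
      B ≤ R ∧ A ≤ (a • R : Sylow p G) := by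
  set N := Subgroup.normalizer (D : Set G)
  obtain ⟨S₁, hS₁⟩ := (hA.comap_subtype (K := N)).exists_le_sylow
  obtain ⟨P₁, hP₁⟩ := (hB.comap_subtype (K := N)).exists_le_sylow
  obtain ⟨k, hk⟩ := hD.exists_card_eq
  rw [← Subgroup.index_ker, Subgroup.normalizerMonoidHom_ker] at hk
  obtain ⟨a, ha, rfl⟩ := exists_mem_smul_sylow_eq hk P₁ S₁
  obtain ⟨R, hR⟩ := (P₁.2.map N.subtype).exists_le_sylow
  refine ⟨a, ha, R, fun x hx => hR ⟨⟨x, hBD hx⟩, hP₁ hx, rfl⟩, fun x hx => ?_⟩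
  obtain ⟨y, hy, hyx⟩ := hS₁ (show (⟨x, hAD hx⟩ : N) ∈ A.subgroupOf N from hx)
  exact ⟨y, hR ⟨y, hy, rfl⟩, congrArg Subtype.val hyx⟩

theorem exists_mem_centralizer_smul_eq
    (hG : ∀ U : Subgroup G, IsPGroup p U → IsPGroup p U.normalizerMonoidHom.range)
    (S P : Sylow p G) :
    ∃ c ∈ Subgroup.centralizer ((S ⊓ P : Subgroup G) : Set G), c • S = P := by
  induction hD : (S ⊓ P : Subgroup G) using WellFoundedGT.induction generalizing S P with
  | _ D ih
  by_cases hSP : S = P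
  · exact ⟨1, one_mem _, hSP ▸ one_smul G S⟩
  have hDS : D < S := hD ▸ inf_le_left.lt_of_ne fun h =>
    hSP (Sylow.ext (S.3 P.2 (inf_eq_left.1 h))).symm
  have hDP : D < P := hD ▸ inf_le_right.lt_of_ne fun h =>
    hSP (Sylow.ext (P.3 S.2 (inf_eq_right.1 h)))
  have := S.2.isNilpotent
  have := P.2.isNilpotent
  obtain ⟨a, ha, R, hPR, hSR⟩ := exists_mem_centralizer_le_smul (hG D (S.2.to_le hDS.le))
    S.2.to_inf_left P.2.to_inf_left inf_le_right inf_le_right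
  have hR : D < (R ⊓ P : Subgroup G) := (lt_inf_normalizer hDP).trans_le (le_inf hPR inf_le_left)
  have haR : D < (S ⊓ (a • R : Sylow p G) : Subgroup G) :=
    (lt_inf_normalizer hDS).trans_le (le_inf inf_le_left hSR)
  obtain ⟨c₁, hc₁, hc₁P⟩ := ih _ hR R P rfl
  obtain ⟨c₂, hc₂, hc₂R⟩ := ih _ haR S (a • R) rfl
  refine ⟨c₁ * a⁻¹ * c₂, mul_mem (mul_mem (Subgroup.centralizer_le hR.le hc₁) (inv_mem ha))
    (Subgroup.centralizer_le haR.le hc₂), ?_⟩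
  rw [mul_smul, mul_smul, hc₂R, inv_smul_smul, hc₁P]

theorem exists_mul_eq_of_mem_normalizer (P : Sylow p G)
    (hP : IsPGroup p (P : Subgroup G).normalizerMonoidHom.range) {g : G}
    (hg : g ∈ Subgroup.normalizer (P : Set G)) :
    ∃ b ∈ P, ∃ a ∈ Subgroup.centralizer (P : Set G), b * a = g := by
  obtain ⟨k, hk⟩ := hP.exists_card_eq
  rw [← Subgroup.index_ker, Subgroup.normalizerMonoidHom_ker] at hk
  obtain ⟨b, hb, a, ha, hba⟩ := (sylow_mul_eq_univ (P.subtype Subgroup.le_normalizer) hk).ge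
    (Set.mem_univ ⟨g, hg⟩)
  exact ⟨b, hb, a, ha, congrArg Subtype.val hba⟩

theorem exists_mem_sylow_conj_eq
    (hG : ∀ U : Subgroup G, IsPGroup p U → IsPGroup p U.normalizerMonoidHom.range)
    (P : Sylow p G) {x u : G} (hx : x ∈ P) (hux : u * x * u⁻¹ ∈ P) :
    ∃ b ∈ P, b * x * b⁻¹ = u * x * u⁻¹ := by
  obtain ⟨c, hc, hcP⟩ := exists_mem_centralizer_smul_eq hG (u • P) P
  rw [smul_smul, Sylow.smul_eq_iff_mem_normalizer] at hcP
  obtain ⟨b, hb, a, ha, hba⟩ := exists_mul_eq_of_mem_normalizer P (hG P P.2) hcP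
  have hax : a * x * a⁻¹ = x := by
    rw [mul_inv_eq_iff_eq_mul]
    exact (Subgroup.mem_centralizer_iff.1 ha x hx).symm
  have hcux : c * (u * x * u⁻¹) * c⁻¹ = u * x * u⁻¹ := by
    rw [mul_inv_eq_iff_eq_mul]
    exact (Subgroup.mem_centralizer_iff.1 hc _ ⟨⟨x, hx, rfl⟩, hux⟩).symm
  refine ⟨b, hb, ?_⟩
  calc b * x * b⁻¹ = b * (a * x * a⁻¹) * b⁻¹ := by rw [hax]
    _ = b * a * x * (b * a)⁻¹ := by group
    _ = c * (u * x * u⁻¹) * c⁻¹ := by rw [hba]; group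
    _ = u * x * u⁻¹ := hcux

open scoped commutatorElement in
/-- **Frobenius' criterion**. -/
theorem isPNilpotent_of_isPGroup_automizer
    (hG : ∀ U : Subgroup G, IsPGroup p U → IsPGroup p U.normalizerMonoidHom.range) :
    IsPNilpotent p G := by
  obtain ⟨P⟩ := (inferInstance : Nonempty (Sylow p G))
  refine isPNilpotent_of_focalSubgroupOf_le_commutator P ?_
  rw [Subgroup.focalSubgroupOf_eq_closure, Subgroup.closure_le]
  rintro g ⟨x, hx, u, hg⟩
  have hgu : x * (u * x⁻¹ * u⁻¹) = g := by rw [hg, commutatorElement_def]; group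
  have hux : u * x⁻¹ * u⁻¹ ∈ P :=
    eq_inv_mul_of_mul_eq hgu ▸ mul_mem (inv_mem hx) g.2
  obtain ⟨b, hb, hbu⟩ := exists_mem_sylow_conj_eq hG P (inv_mem hx) hux
  have hgb : g = ⁅(⟨x, hx⟩ : P), ⟨b, hb⟩⁆ := Subtype.ext <| by
    change (g : G) = x * b * x⁻¹ * b⁻¹
    rw [← hgu, ← hbu, ← mul_assoc, ← mul_assoc]
  exact hgb ▸ Subgroup.commutator_mem_commutator (Subgroup.mem_top _) (Subgroup.mem_top _)

end Frobenius

theorem exists_dvd_pow_sub_one_of_faithfulSMul {p q m : ℕ} [hp : Fact p.Prime] [hq : Fact q.Prime]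
    (hqp : q ≠ p) {A U : Type*} [Group A] [Nontrivial A] [Group U] [MulDistribMulAction A U]
    [FaithfulSMul A U] (hA : IsPGroup q A) (hU : Nat.card U = p ^ m) :
    ∃ i ∈ Finset.Icc 1 m, q ∣ p ^ i - 1 := by
  have : Finite U := Nat.finite_of_card_ne_zero (hU ▸ pow_ne_zero m hp.out.ne_zero)
  let C := FixedPoints.subgroup A U
  obtain ⟨c, hcm, hc⟩ := (Nat.dvd_prime_pow hp.out).1 (hU ▸ C.card_subgroup_dvd_card)
  have hne : c ≠ m := by
    rintro rfl
    have hC : C = ⊤ := Subgroup.eq_top_of_card_eq C (hc.trans hU.symm)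
    obtain ⟨a, ha⟩ := exists_ne (1 : A)
    refine ha (FaithfulSMul.eq_of_smul_eq_smul fun u : U => ?_)
    rw [one_smul]
    exact (hC ▸ Subgroup.mem_top u : u ∈ C) a
  have hmod : p ^ c ≡ p ^ m [MOD q] := hU ▸ hc ▸ (hA.card_modEq_card_fixedPoints U).symm
  refine ⟨m - c, Finset.mem_Icc.2 ⟨by lia, by lia⟩, ?_⟩
  have hdvd := (Nat.modEq_iff_dvd' (pow_le_pow_right₀ hp.out.one_le hcm)).1 hmod
  rw [← Nat.add_sub_of_le hcm, pow_add, ← Nat.mul_sub_one] at hdvd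
  exact (((Nat.coprime_primes hq.out hp.out).2 hqp).pow_right c).dvd_of_dvd_mul_left hdvd

theorem isPGroup_of_card_coprime_pow_sub_one {p m : ℕ} [hp : Fact p.Prime] {A U : Type*}
    [Group A] [Finite A] [Group U] [MulDistribMulAction A U] [FaithfulSMul A U]
    (hU : Nat.card U = p ^ m) (hA : ∀ i ∈ Finset.Icc 1 m, (Nat.card A).Coprime (p ^ i - 1)) :
    IsPGroup p A := by
  rw [isPGroup_iff_primeFactors_card_subset hp.out.ne_zero]
  intro q hq
  by_contra hqp
  rw [hp.out.primeFactors, Finset.mem_singleton] at hqp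
  have : Fact q.Prime := ⟨Nat.prime_of_mem_primeFactors hq⟩
  have hqA := Nat.dvd_of_mem_primeFactors hq
  obtain ⟨S⟩ := (inferInstance : Nonempty (Sylow q A))
  have : Nontrivial S := (Subgroup.nontrivial_iff_ne_bot _).2 (S.ne_bot_of_dvd_card hqA)
  obtain ⟨i, hi, hqi⟩ := exists_dvd_pow_sub_one_of_faithfulSMul hqp S.2 hU
  exact Nat.not_coprime_of_dvd_of_dvd (Fact.out : q.Prime).one_lt hqA hqi (hA i hi)

theorem isPNilpotent_of_coprime_pow_sub_one {p m : ℕ} [hp : Fact p.Prime] {G : Type*} [Group G]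
    [Finite G] (P : Sylow p G) (hP : Nat.card P = p ^ m)
    (hG : ∀ i ∈ Finset.Icc 1 m, (Nat.card G).Coprime (p ^ i - 1)) : IsPNilpotent p G := by
  refine isPNilpotent_of_isPGroup_automizer fun U hU => ?_
  obtain ⟨k, hk⟩ := hU.exists_card_eq
  have hkm : p ^ k ∣ p ^ m :=
    hP ▸ P.pow_dvd_card_of_pow_dvd_card (hk ▸ U.card_subgroup_dvd_card)
  rw [Nat.pow_dvd_pow_iff_le_right hp.out.one_lt] at hkm
  refine isPGroup_of_card_coprime_pow_sub_one hk fun i hi => ?_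
  have hdvd : Nat.card U.normalizerMonoidHom.range ∣ Nat.card G :=
    (Subgroup.card_range_dvd _).trans (Subgroup.card_subgroup_dvd_card _)
  exact (hG i (Finset.Icc_subset_Icc_right hkm hi)).coprime_dvd_left hdvd

theorem exists_index_eq_pow_of_mul_eq_univ {p : ℕ} [Fact p.Prime] {G : Type*} [Group G] [Finite G]
    {H T : Subgroup G} (hH : IsPGroup p H) (hHT : (H : Set G) * (T : Set G) = Set.univ) :
    ∃ k : ℕ, T.index = p ^ k := by
  obtain ⟨k, hk⟩ := hH.card_orbit ((1 : G) : G ⧸ T)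
  have horbit : MulAction.orbit H ((1 : G) : G ⧸ T) = Set.univ := by
    refine Set.eq_univ_of_forall fun q => ?_
    obtain ⟨g, rfl⟩ := QuotientGroup.mk_surjective q
    obtain ⟨h, hh, t, ht, rfl⟩ := hHT.ge (Set.mem_univ g)
    exact ⟨⟨h, hh⟩, QuotientGroup.eq.2 (by simpa using ht)⟩
  exact ⟨k, by rw [← hk, horbit, Nat.card_univ, Subgroup.index_eq_card]⟩

theorem isComplement'_sylow_of_index_eq_pow {p : ℕ} [Fact p.Prime] {G : Type*} [Group G]
    [Finite G] (P : Sylow p G) {K : Subgroup G} {k : ℕ} (hcard : (Nat.card K).Coprime p)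
    (hindex : K.index = p ^ k) : K.IsComplement' P := by
  obtain ⟨m, hm⟩ := P.2.exists_card_eq
  have hcop : (Nat.card K).Coprime (Nat.card P) := hm ▸ hcard.pow_right m
  have hKP : Nat.card K ∣ (P : Subgroup G).index :=
    hcop.dvd_of_dvd_mul_left ((P : Subgroup G).card_mul_index ▸ K.card_subgroup_dvd_card)
  have hPK : (P : Subgroup G).index ∣ Nat.card K :=
    (hindex ▸ ((coprime_index_sylow P).pow_left k).symm :
      (P : Subgroup G).index.Coprime K.index).dvd_of_dvd_mul_right
        (K.card_mul_index ▸ (P : Subgroup G).index_dvd_card)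
  refine Subgroup.isComplement'_of_coprime ?_ hcop
  rw [Nat.dvd_antisymm hKP hPK, mul_comm]
  exact (P : Subgroup G).card_mul_index

theorem exists_isComplement'_of_hasPNilpotentSupplement {p : ℕ} [Fact p.Prime] {G : Type*}
    [Group G] [Finite G] (P : Sylow p G) {H : Subgroup G} (hH : IsPGroup p H)
    (hsup : HasPNilpotentSupplement p H) :
    ∃ K : Subgroup G, K.IsComplement' P ∧
      (H : Set G) * (Subgroup.normalizer (K : Set G) : Set G) = Set.univ := by
  obtain ⟨T, ⟨K, hK, hcard, k, hk⟩, hHT⟩ := hsup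
  obtain ⟨l, hl⟩ := exists_index_eq_pow_of_mul_eq_univ hH hHT
  have hT : T ≤ Subgroup.normalizer (K.map T.subtype : Set G) := by
    have := Subgroup.le_normalizer_map (H := K) T.subtype
    rwa [Subgroup.normalizer_eq_top, ← MonoidHom.range_eq_map, Subgroup.range_subtype] at this
  refine ⟨K.map T.subtype, isComplement'_sylow_of_index_eq_pow P (k := k + l) ?_ ?_,
    Set.eq_univ_of_univ_subset ?_⟩
  · rwa [Subgroup.card_subtype]
  · rw [Subgroup.index_map_subtype, hk, hl, pow_add]
  · exact hHT.ge.trans (Set.mul_subset_mul_left hT)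

/-- Each element of the transversal `K` contributes the factor `φ t` to the transfer. -/
theorem transfer_eq_pow_index_of_isComplement' {G A : Type*} [Group G] [CommGroup A]
    {P K : Subgroup G} [P.FiniteIndex] (φ : P →* A) (hK : K.IsComplement' P) {t : P}
    (ht : (t : G) ∈ Subgroup.normalizer (K : Set G)) : φ.transfer t = φ t ^ P.index := by
  let T : P.LeftTransversal := ⟨(K : Set G), hK⟩
  let _ := P.fintypeQuotientOfFiniteIndex
  have hdiff (q : G ⧸ P) : ((T.2.leftQuotientEquiv q : G))⁻¹ *
      ((t : G) • T).2.leftQuotientEquiv q = t := by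
    obtain ⟨k, rfl⟩ := T.2.leftQuotientEquiv.symm.surjective q
    have hk : (t : G)⁻¹ * k * t ∈ K := (Subgroup.mem_normalizer_iff''.1 ht k).1 k.2
    have hsmul : (t : G)⁻¹ • T.2.leftQuotientEquiv.symm k =
        T.2.leftQuotientEquiv.symm ⟨(t : G)⁻¹ * k * t, hk⟩ := by
      change (((t : G)⁻¹ * k : G) : G ⧸ P) = (((t : G)⁻¹ * k * t : G) : G ⧸ P)
      rw [QuotientGroup.mk_mul_of_mem _ t.2]
    rw [Subgroup.smul_apply_eq_smul_apply_inv_smul, hsmul, Equiv.apply_symm_apply,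
      Equiv.apply_symm_apply]
    simp only [smul_eq_mul, mul_assoc, mul_inv_cancel_left, inv_mul_cancel_left]
  calc φ.transfer t = ∏ _q : G ⧸ P, φ t := by
        rw [φ.transfer_def T]
        exact Finset.prod_congr rfl fun q _ => congrArg φ (Subtype.ext (hdiff q))
    _ = φ t ^ P.index := by
        rw [Finset.prod_const, Finset.card_univ, Subgroup.index_eq_card, Nat.card_eq_fintype_card]

theorem ker_le_commutator_of_surjective {P : Type*} [Group P] [Finite P]
    {f : P →* Abelianization P} (hf : Function.Surjective f) : f.ker ≤ commutator P := by
  have hlift : Function.Injective (Abelianization.lift f) :=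
    Finite.injective_iff_surjective.2 fun y => (hf y).imp' Abelianization.of fun _ hx => hx
  intro x hx
  rw [← Abelianization.ker_of P, MonoidHom.mem_ker]
  exact (injective_iff_map_eq_one _).1 hlift _ hx

section Supplement

variable {p : ℕ} [Fact p.Prime] {G : Type*} [Group G] [Finite G] (P : Sylow p G)

theorem exists_notMem_transfer_eq_pow_index {A : Type*} [CommGroup A]
    (φ : (P : Subgroup G) →* A) {M : Subgroup P} (hM : M ≠ ⊤)
    (hsup : HasPNilpotentSupplement p (M.map (P : Subgroup G).subtype)) :
    ∃ t : P, t ∉ M ∧ φ.transfer t = φ t ^ (P : Subgroup G).index := by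
  obtain ⟨K, hK, hKM⟩ := exists_isComplement'_of_hasPNilpotentSupplement P
    ((P.2.to_subgroup M).map (P : Subgroup G).subtype) hsup
  obtain ⟨x, hx⟩ : ∃ x, x ∉ M := by
    by_contra! h
    exact hM ((Subgroup.eq_top_iff' M).2 h)
  obtain ⟨_, ⟨m, hm, rfl⟩, t, ht, hmt⟩ := hKM.ge (Set.mem_univ (x : G))
  have ht_eq : ((m⁻¹ * x : P) : G) = t := (eq_inv_mul_of_mul_eq hmt).symm
  refine ⟨m⁻¹ * x, fun hmem => hx ?_, ?_⟩
  · exact (M.mul_mem_cancel_left (inv_mem hm)).1 hmem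
  · exact transfer_eq_pow_index_of_isComplement' φ hK (ht_eq ▸ ht)

theorem surjective_transfer_abelianization_of_hasPNilpotentSupplement
    (hsup : ∀ M : Subgroup P, IsCoatom M →
      HasPNilpotentSupplement p (M.map (P : Subgroup G).subtype)) :
    Function.Surjective
      ((Abelianization.of (G := (P : Subgroup G))).transfer.comp (P : Subgroup G).subtype) := by
  set V := (Abelianization.of (G := (P : Subgroup G))).transfer.comp (P : Subgroup G).subtype
  have hcomap : V.range.comap Abelianization.of = ⊤ := by
    refine (eq_top_or_exists_le_coatom _).resolve_right ?_
    rintro ⟨M, hM, hle⟩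
    obtain ⟨t, htM, ht⟩ := exists_notMem_transfer_eq_pow_index P Abelianization.of hM.1 (hsup M hM)
    obtain ⟨k, hk⟩ := IsPGroup.iff_orderOf.1 P.2 t
    have hcop : (P : Subgroup G).index.Coprime (orderOf (Abelianization.of t)) :=
      ((coprime_index_sylow P).pow_left k).symm.coprime_dvd_right
        (hk ▸ orderOf_map_dvd Abelianization.of t)
    obtain ⟨j, hj⟩ := exists_pow_eq_self_of_coprime hcop
    have hmem : Abelianization.of t ^ (P : Subgroup G).index ∈ V.range := ⟨t, ht⟩
    exact htM (hle (show Abelianization.of t ∈ V.range from hj ▸ pow_mem hmem j))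
  intro y
  obtain ⟨x, rfl⟩ := QuotientGroup.mk_surjective y
  exact (Subgroup.eq_top_iff' _).1 hcomap x

theorem isPNilpotent_of_hasPNilpotentSupplement_of_isCoatom
    (hsup : ∀ M : Subgroup P, IsCoatom M →
      HasPNilpotentSupplement p (M.map (P : Subgroup G).subtype)) : IsPNilpotent p G := by
  refine isPNilpotent_of_focalSubgroupOf_le_commutator P ?_
  refine le_trans (fun x hx => ?_) (ker_le_commutator_of_surjective
    (surjective_transfer_abelianization_of_hasPNilpotentSupplement P hsup))
  exact Abelianization.commutator_subset_ker (Abelianization.of (G := P)).transfer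
    ((P : Subgroup G).focalSubgroup_le_commutator (Subgroup.mem_subgroupOf.1 hx))

end Supplement

theorem isMaximalIn_map_subtype_s4 {G : Type*} [Group G] {P : Subgroup G} {M : Subgroup P}
    (hM : IsCoatom M) : IsMaximalIn (M.map P.subtype) P := by
  refine ⟨(Subgroup.map_subtype_le M).lt_of_ne fun h => hM.1 ?_, fun L hML hLP => ?_⟩
  · rw [← Subgroup.map_subtype_inj, h, ← MonoidHom.range_eq_map, Subgroup.range_subtype]
  · refine hLP.antisymm (Subgroup.subgroupOf_eq_top.1 (hM.2 _ (lt_of_le_not_ge ?_ ?_)))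
    · exact Subgroup.map_le_iff_le_comap.1 hML.le
    · rw [← Subgroup.map_le_map_iff_of_injective P.subtype_injective,
        Subgroup.map_subgroupOf_eq_of_le hLP]
      exact hML.not_ge

theorem isNMaximalIn_succ {G : Type*} [Group G] {k : ℕ} {H M P : Subgroup G}
    (hM : IsMaximalIn M P) (hH : IsNMaximalIn k H M) : IsNMaximalIn (k + 1) H P := by
  obtain ⟨c, rfl, rfl, hc⟩ := hH
  exact ⟨Fin.cons P c, rfl, by rw [← Fin.succ_last, Fin.cons_succ], Fin.cases hM hc⟩

theorem card_eq_card_map_mul_of_isCoatom {p : ℕ} [Fact p.Prime] {G : Type*} [Group G] [Finite G]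
    {P : Subgroup G} (hP : IsPGroup p P) {M : Subgroup P} (hM : IsCoatom M) :
    Nat.card (M.map P.subtype) * p = Nat.card P := by
  rw [Subgroup.card_subtype, ← index_eq_of_isCoatom hP hM, M.card_mul_index]

theorem exists_isNMaximalIn {p : ℕ} [hp : Fact p.Prime] {G : Type*} [Group G] [Finite G] {k : ℕ}
    {P : Subgroup G} (hP : IsPGroup p P) (hk : p ^ k ∣ Nat.card P) :
    ∃ H ≤ P, IsNMaximalIn k H P := by
  induction k generalizing P with
  | zero => exact ⟨P, le_rfl, fun _ => P, rfl, rfl, fun i => i.elim0⟩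
  | succ k ih =>
    have : Nontrivial P := Finite.one_lt_card_iff_nontrivial.1
      ((Nat.one_lt_pow k.succ_ne_zero hp.out.one_lt).trans_le (Nat.le_of_dvd Nat.card_pos hk))
    obtain ⟨M, hM, -⟩ := (eq_top_or_exists_le_coatom (⊥ : Subgroup P)).resolve_left bot_ne_top
    rw [← card_eq_card_map_mul_of_isCoatom hP hM, pow_succ] at hk
    obtain ⟨H, hHM, hH⟩ := ih ((hP.to_subgroup M).map P.subtype)
      (Nat.dvd_of_mul_dvd_mul_right hp.out.pos hk)
    exact ⟨H, hHM.trans (Subgroup.map_subtype_le M),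
      isNMaximalIn_succ (isMaximalIn_map_subtype_s4 hM) hH⟩

theorem hasPNilpotentSupplement_mono {p : ℕ} {G : Type*} [Group G] {H K : Subgroup G}
    (hHK : H ≤ K) (hH : HasPNilpotentSupplement p H) : HasPNilpotentSupplement p K := by
  obtain ⟨T, hT, hHT⟩ := hH
  exact ⟨T, hT, Set.eq_univ_of_univ_subset (hHT.ge.trans (Set.mul_subset_mul_right hHK))⟩

theorem isPNilpotent_of_hasPNilpotentSupplement_of_isNMaximalIn {p n : ℕ} [hp : Fact p.Prime]
    {G : Type*} [Group G] [Finite G] (P : Sylow p G) (hn : 1 ≤ n) (hnP : p ^ n ∣ Nat.card P)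
    (hsup : ∀ H : Subgroup G, IsNMaximalIn n H P → HasPNilpotentSupplement p H) :
    IsPNilpotent p G := by
  obtain ⟨n, rfl⟩ := Nat.exists_eq_add_of_le' hn
  refine isPNilpotent_of_hasPNilpotentSupplement_of_isCoatom P fun M hM => ?_
  rw [← card_eq_card_map_mul_of_isCoatom P.2 hM, pow_succ] at hnP
  obtain ⟨H, hHM, hH⟩ := exists_isNMaximalIn ((P.2.to_subgroup M).map (P : Subgroup G).subtype)
    (Nat.dvd_of_mul_dvd_mul_right hp.out.pos hnP)
  exact hasPNilpotentSupplement_mono hHM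
    (hsup H (isNMaximalIn_succ (isMaximalIn_map_subtype_s4 hM) hH))

theorem stmt_4_general {G : Type*} [Group G] [Finite G] {p n : ℕ} [Fact p.Prime] (hn : 1 ≤ n)
    (hcop : (Nat.card G).Coprime (∏ i ∈ Finset.Ico 1 n, (p ^ i - 1))) (P : Sylow p G)
    (hsup : ∀ H : Subgroup G, IsNMaximalIn n H P → HasPNilpotentSupplement p H) :
    IsPNilpotent p G := by
  obtain ⟨m, hm⟩ := P.2.exists_card_eq
  obtain hnm | hmn := le_or_gt n m
  · exact isPNilpotent_of_hasPNilpotentSupplement_of_isNMaximalIn P hn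
      (hm ▸ pow_dvd_pow p hnm) hsup
  · refine isPNilpotent_of_coprime_pow_sub_one P hm fun i hi => ?_
    rw [Finset.mem_Icc] at hi
    exact Nat.coprime_prod_right_iff.1 hcop i (Finset.mem_Ico.2 ⟨hi.1, hi.2.trans_lt hmn⟩)

/-- If `gcd(|G|, (p-1)(p²-1)⋯(pⁿ-1)) = 1` for some `n ≥ 1`, `P` is a
Sylow `p`-subgroup of `G` and every `n`-maximal subgroup of `P` has a `p`-nilpotent
supplement in `G`, then `G` is `p`-nilpotent. -/
theorem stmt_4 {G : Type*} [Group G] [Finite G] (p n : ℕ) (hp : p.Prime)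
    (hpdvd : p ∣ Nat.card G) (hn : 1 ≤ n)
    (hcop : Nat.Coprime (Nat.card G) (∏ i ∈ Finset.Icc 1 n, (p ^ i - 1)))
    (P : Subgroup G) (hP : IsSylowIn p P ⊤)
    (hsup : ∀ H : Subgroup G, IsNMaximalIn n H P → HasPNilpotentSupplement p H) :
    IsPNilpotent p G := by
  have : Fact p.Prime := ⟨hp⟩
  exact stmt_4_general hn (hcop.coprime_dvd_right (Finset.prod_dvd_prod_of_subset _ _ _
    Finset.Ico_subset_Icc_self)) (hP.2.1.toSylow (P.relIndex_top_right ▸ hP.2.2)) hsup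
end
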